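/- arXiv:1105.2735 — 2 statements merged into one kernel-verified Lean document; each statement's English description precedes it below -/
import Mathlib

section
/- Let ν ∈ ℂ \ (−ℕ₀), μ ∈ (−1/2, ∞) \ {0}, x ∈ [−1, 1], and ρ ∈ ℝ with 0 < ρ < 1. Then 1/(1 + ρ² − 2ρx)^ν = (Γ(μ) e^{iπ(μ−ν+1/2)})/(√π Γ(ν) ρ^{μ+1/2} (1−ρ²)^{ν−μ−1/2}) · Σ_{n=0}^∞ (n + μ) Q_{n+μ−1/2}^{ν−μ−1/2}((1+ρ²)/(2ρ)) C_n^μ(x). -/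
open Complex

/-- Pochhammer symbol (rising factorial) `(a)_k = a (a+1) ⋯ (a+k-1)`. -/
noncomputable def poch (a : ℂ) (k : ℕ) : ℂ := ∏ i ∈ Finset.range k, (a + (i : ℂ))

/-- Gauss hypergeometric function `₂F₁(a,b;c;w)` as a series. -/
noncomputable def hyp2F1 (a b c w : ℂ) : ℂ :=
  ∑' k : ℕ, poch a k * poch b k / (poch c k * (Nat.factorial k : ℂ)) * w ^ k

/-- Terminating generalized hypergeometric function `₃F₂(-m,a₂,a₃;b₁,b₂;1)`. -/
noncomputable def hyp3F2 (m : ℕ) (a2 a3 b1 b2 : ℂ) : ℂ :=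
  ∑ j ∈ Finset.range (m + 1),
    poch (-(m : ℂ)) j * poch a2 j * poch a3 j /
      (poch b1 j * poch b2 j * (Nat.factorial j : ℂ))

/-- Gegenbauer polynomial `C_n^μ(x)`. -/
noncomputable def gegenbauerC (n : ℕ) (μ : ℂ) (x : ℂ) : ℂ :=
  poch (2 * μ) n / (Nat.factorial n : ℂ) *
    ∑ j ∈ Finset.range (n + 1),
      poch (-(n : ℂ)) j * poch ((n : ℂ) + 2 * μ) j /
          (poch (μ + 1 / 2) j * (Nat.factorial j : ℂ)) * ((1 - x) / 2) ^ j

/-- Associated Legendre function of the second kind `Q_ν^μ(z)` (principal branches). -/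
noncomputable def legendreQ (ν μ z : ℂ) : ℂ :=
  (Real.sqrt Real.pi : ℂ) * Complex.exp (Real.pi * I * μ) * Complex.Gamma (ν + μ + 1) *
      (z ^ 2 - 1) ^ (μ / 2) /
      ((2 : ℂ) ^ (ν + 1) * Complex.Gamma (ν + 3 / 2) * z ^ (ν + μ + 1)) *
    hyp2F1 ((ν + μ + 2) / 2) ((ν + μ + 1) / 2) (ν + 3 / 2) (1 / z ^ 2)

/-- Legendre polynomial `P_n(x)`. -/
noncomputable def legendrePoly (n : ℕ) (x : ℂ) : ℂ :=
  ∑ j ∈ Finset.range (n + 1),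
    poch (-(n : ℂ)) j * poch ((n : ℂ) + 1) j / (poch 1 j * (Nat.factorial j : ℂ)) *
      ((1 - x) / 2) ^ j

/-- Chebyshev polynomial of the second kind `U_n(x)`. -/
noncomputable def chebyshevU (n : ℕ) (x : ℂ) : ℂ :=
  ((n : ℂ) + 1) *
    ∑ j ∈ Finset.range (n + 1),
      poch (-(n : ℂ)) j * poch ((n : ℂ) + 2) j / (poch (3 / 2) j * (Nat.factorial j : ℂ)) *
        ((1 - x) / 2) ^ j


lemma poch_zero (a : ℂ) : poch a 0 = 1 := by simp [poch]

lemma poch_succ (a : ℂ) (k : ℕ) : poch a (k + 1) = poch a k * (a + k) := by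
  simp [poch, Finset.prod_range_succ]

lemma poch_add (a : ℂ) (m k : ℕ) : poch a (m + k) = poch a m * poch (a + m) k := by
  simp only [poch, Finset.prod_range_add]
  congr 1
  apply Finset.prod_congr rfl
  intro i _
  push_cast; ring

lemma poch_succ' (a : ℂ) (k : ℕ) : poch a (k + 1) = a * poch (a + 1) k := by
  rw [add_comm, poch_add, poch_succ, poch_zero]; simp

lemma poch_ne_zero (a : ℂ) (h : ∀ m : ℕ, a ≠ -(m : ℂ)) (k : ℕ) : poch a k ≠ 0 := by
  rw [poch, Finset.prod_ne_zero_iff]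
  intro i _ h0
  exact h i (eq_neg_of_add_eq_zero_left h0)

lemma poch_neg_nat (n j : ℕ) (h : n < j) : poch (-(n : ℂ)) j = 0 := by
  rw [poch, Finset.prod_eq_zero_iff]
  exact ⟨n, by simpa using h, by simp⟩

lemma poch_dup (a : ℂ) (k : ℕ) :
    poch ((a + 1) / 2) k * poch (a / 2) k = poch a (2 * k) / 4 ^ k := by
  induction k with
  | zero => simp [poch_zero]
  | succ k ih =>
    rw [show 2 * (k + 1) = 2 * k + 1 + 1 by ring, poch_succ, poch_succ, poch_succ _ (2 * k + 1),
      poch_succ _ (2 * k), pow_succ]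
    have : poch a (2 * k) = poch ((a + 1) / 2) k * poch (a / 2) k * 4 ^ k := by
      rw [ih]; field_simp
    rw [this]
    push_cast
    field_simp
    ring

lemma norm_poch_div_le (a : ℂ) (K : ℕ) (hK : ‖a‖ ≤ K) (k : ℕ) :
    ‖poch a k / (k.factorial : ℂ)‖ ≤ ((k : ℝ) + 1) ^ K := by
  induction k with
  | zero => simp [poch_zero]
  | succ k ih =>
    have e : poch a (k + 1) / ((k + 1).factorial : ℂ)
        = poch a k / (k.factorial : ℂ) * ((a + k) / (k + 1)) := by
      rw [poch_succ, Nat.factorial_succ]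
      have : (k.factorial : ℂ) ≠ 0 := by exact_mod_cast k.factorial_ne_zero
      have : (k + 1 : ℂ) ≠ 0 := by exact_mod_cast k.succ_ne_zero
      push_cast
      field_simp
    rw [e, norm_mul]
    have hk : (0 : ℝ) < (k : ℝ) + 1 := by positivity
    have h2 : ‖(a + k) / ((k : ℂ) + 1)‖ ≤ (1 + 1 / ((k : ℝ) + 1)) ^ K := by
      have b := one_add_mul_le_pow (a := 1 / ((k : ℝ) + 1)) (by
        have : 0 ≤ 1 / ((k : ℝ) + 1) := by positivity
        linarith) K
      refine le_trans ?_ b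
      rw [norm_div]
      have h3 : ‖(k : ℂ) + 1‖ = (k : ℝ) + 1 := by
        have := Complex.norm_natCast (k + 1)
        push_cast at this
        exact this
      rw [h3, div_le_iff₀ hk]
      have h4 : ‖a + (k : ℂ)‖ ≤ K + k := by
        refine (norm_add_le _ _).trans ?_
        simpa using hK
      refine h4.trans ?_
      field_simp
      linarith
    calc _ ≤ ((k : ℝ) + 1) ^ K * (1 + 1 / ((k : ℝ) + 1)) ^ K :=
          mul_le_mul ih h2 (norm_nonneg _) (by positivity)
      _ = (((k + 1 : ℕ) : ℝ) + 1) ^ K := by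
          rw [← mul_pow]
          congr 1
          push_cast
          field_simp
          try ring

/-- coefficient of `((1-x)/2)^j` -/
noncomputable def gcoef (μ : ℂ) (n j : ℕ) : ℂ :=
  poch (-(n : ℂ)) j / (n.factorial : ℂ) * poch (2 * μ) (n + j) /
    (poch (μ + 1 / 2) j * (j.factorial : ℂ))

lemma gegenbauerC_eq (n N : ℕ) (h : n + 1 ≤ N) (μ x : ℂ) :
    gegenbauerC n μ x = ∑ j ∈ Finset.range N, gcoef μ n j * ((1 - x) / 2) ^ j := by
  have : gegenbauerC n μ x = ∑ j ∈ Finset.range (n + 1), gcoef μ n j * ((1 - x) / 2) ^ j := by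
    rw [gegenbauerC, Finset.mul_sum]
    apply Finset.sum_congr rfl
    intro j _
    rw [gcoef, poch_add, add_comm (n : ℂ) (2 * μ)]
    ring
  rw [this]
  apply Finset.sum_subset
  · simpa using h
  · intro j _ hj
    have : n < j := by simp at hj; omega
    simp [gcoef, poch_neg_nat n j this]

lemma u_rec1 (n j : ℕ) : poch (-(n : ℂ)) j / (n.factorial : ℂ) =
    ((n : ℂ) + 1 - j) * (poch (-((n + 1 : ℕ) : ℂ)) j / ((n + 1).factorial : ℂ)) := by
  have h0 : (n.factorial : ℂ) ≠ 0 := by exact_mod_cast n.factorial_ne_zero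
  have h1 : (n + 1 : ℂ) ≠ 0 := by exact_mod_cast n.succ_ne_zero
  have a := poch_succ (-((n + 1 : ℕ) : ℂ)) j
  rw [poch_succ'] at a
  have e : (-((n + 1 : ℕ) : ℂ)) + 1 = -(n : ℂ) := by push_cast; ring
  rw [e] at a
  rw [Nat.factorial_succ]
  push_cast at a ⊢
  field_simp
  linear_combination -a

lemma u_rec2 (n j : ℕ) : poch (-(n : ℂ)) j / (n.factorial : ℂ) =
    -(poch (-((n + 1 : ℕ) : ℂ)) (j + 1) / ((n + 1).factorial : ℂ)) := by
  have h0 : (n.factorial : ℂ) ≠ 0 := by exact_mod_cast n.factorial_ne_zero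
  have h1 : (n + 1 : ℂ) ≠ 0 := by exact_mod_cast n.succ_ne_zero
  rw [poch_succ']
  have e : (-((n + 1 : ℕ) : ℂ)) + 1 = -(n : ℂ) := by push_cast; ring
  rw [e, Nat.factorial_succ]
  push_cast
  field_simp

lemma gcoef_rec0 (μ : ℂ) (n : ℕ) :
    ((n : ℂ) + 2) * gcoef μ (n + 2) 0 = 2 * ((n : ℂ) + 1 + μ) * gcoef μ (n + 1) 0
      - ((n : ℂ) + 2 * μ) * gcoef μ n 0 := by
  have a1 := u_rec1 n 0
  have a2 := u_rec1 (n + 1) 0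
  simp only [gcoef, add_zero]
  rw [a1, a2, poch_succ _ (n + 1), poch_succ _ n]
  simp only [poch_zero]
  push_cast
  ring

lemma gcoef_rec (μ : ℂ) (hμ : ∀ m : ℕ, μ + 1 / 2 ≠ -(m : ℂ)) (n j : ℕ) :
    ((n : ℂ) + 2) * gcoef μ (n + 2) (j + 1) =
      2 * ((n : ℂ) + 1 + μ) * (gcoef μ (n + 1) (j + 1) - 2 * gcoef μ (n + 1) j)
      - ((n : ℂ) + 2 * μ) * gcoef μ n (j + 1) := by
  have a1 := u_rec1 n (j + 1)
  have a2 := u_rec1 (n + 1) (j + 1)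
  have a3 := u_rec2 (n + 1) j
  simp only [gcoef]
  rw [a1, a3, a2]
  rw [show n + 2 + (j + 1) = n + (j + 1) + 1 + 1 by ring,
    show n + 1 + (j + 1) = n + (j + 1) + 1 by ring,
    show n + 1 + j = n + (j + 1) by ring, poch_succ _ (n + (j + 1) + 1),
    poch_succ _ (n + (j + 1)), poch_succ (μ + 1 / 2) j, Nat.factorial_succ j,
    show n + 2 = n + 1 + 1 from rfl]
  have p1 : poch (μ + 1 / 2) j ≠ 0 := poch_ne_zero _ hμ j
  have p2 : μ + 1 / 2 + j ≠ 0 := fun h => hμ j (eq_neg_of_add_eq_zero_left h)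
  have h0 : (j.factorial : ℂ) ≠ 0 := by exact_mod_cast j.factorial_ne_zero
  have h1 : (j + 1 : ℂ) ≠ 0 := by exact_mod_cast j.succ_ne_zero
  generalize poch (-((n + 1 + 1 : ℕ) : ℂ)) (j + 1) / ((n + 1 + 1).factorial : ℂ) = U
  generalize poch (2 * μ) (n + (j + 1)) = W
  generalize hP : poch (μ + 1 / 2) j = P at *
  generalize hF : (j.factorial : ℂ) = F at *
  have e1 : W / (P * F) = W / (P * (μ + 1 / 2 + j) * (((j : ℂ) + 1) * F)) *
      ((μ + 1 / 2 + j) * ((j : ℂ) + 1)) := by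
    generalize μ + 1 / 2 + (j : ℂ) = A at *
    field_simp
  have e2 : -U * W / (P * F) = -U * (W / (P * F)) := by ring
  rw [e2, e1]
  push_cast
  try rw [hF]
  generalize hV : (P * (μ + 1 / 2 + j) * (((j : ℂ) + 1) * F)) = V
  simp only [div_eq_mul_inv]
  ring

lemma gegenbauer_rec (μ x : ℂ) (hμ : ∀ m : ℕ, μ + 1 / 2 ≠ -(m : ℂ)) (n : ℕ) :
    ((n : ℂ) + 2) * gegenbauerC (n + 2) μ x = 2 * ((n : ℂ) + 1 + μ) * x * gegenbauerC (n + 1) μ x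
      - ((n : ℂ) + 2 * μ) * gegenbauerC n μ x := by
  set y := (1 - x) / 2 with hy
  have hx : x = 1 - 2 * y := by rw [hy]; ring
  have hC1 : x * gegenbauerC (n + 1) μ x = gcoef μ (n + 1) 0 +
      ∑ j ∈ Finset.range (n + 3), (gcoef μ (n + 1) (j + 1) - 2 * gcoef μ (n + 1) j) * y ^ (j + 1) := by
    have r1 := gegenbauerC_eq (n + 1) (n + 3) (by omega) μ x
    have r2 := gegenbauerC_eq (n + 1) (n + 3 + 1) (by omega) μ x
    rw [Finset.sum_range_succ'] at r2
    have : x * gegenbauerC (n + 1) μ x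
        = gegenbauerC (n + 1) μ x - 2 * y * gegenbauerC (n + 1) μ x := by rw [hx]; ring
    rw [this]
    nth_rewrite 1 [r2]
    rw [r1, Finset.mul_sum, ← hy]
    simp only [sub_mul, Finset.sum_sub_distrib, pow_zero, mul_one]
    have : ∑ i ∈ Finset.range (n + 3), 2 * y * (gcoef μ (n + 1) i * y ^ i) =
        ∑ i ∈ Finset.range (n + 3), 2 * gcoef μ (n + 1) i * y ^ (i + 1) := by
      apply Finset.sum_congr rfl; intros; ring
    rw [this]; ring
  rw [mul_assoc (2 * ((n : ℂ) + 1 + μ)), hC1, gegenbauerC_eq (n + 2) (n + 3 + 1) (by omega),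
    gegenbauerC_eq n (n + 3 + 1) (by omega), Finset.sum_range_succ', Finset.sum_range_succ' _ (n + 3)]
  rw [← hy]
  simp only [pow_zero, mul_one]
  rw [mul_add ((n : ℂ) + 2), Finset.mul_sum]
  have : ∀ j, ((n : ℂ) + 2) * (gcoef μ (n + 2) (j + 1) * y ^ (j + 1)) =
     2 * ((n : ℂ) + 1 + μ) * ((gcoef μ (n + 1) (j + 1) - 2 * gcoef μ (n + 1) j) * y ^ (j + 1)) -
       ((n : ℂ) + 2 * μ) * (gcoef μ n (j + 1) * y ^ (j + 1)) := by
    intro j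
    rw [← mul_assoc, gcoef_rec μ hμ]; ring
  simp only [this, Finset.sum_sub_distrib, ← Finset.mul_sum]
  linear_combination gcoef_rec0 μ n

lemma gegenbauer_zero (μ x : ℂ) : gegenbauerC 0 μ x = 1 := by
  simp [gegenbauerC, poch_zero]

lemma gegenbauer_one (μ x : ℂ) (hμ : ∀ m : ℕ, μ + 1 / 2 ≠ -(m : ℂ)) :
    gegenbauerC 1 μ x = 2 * μ * x := by
  have h : μ + 1 / 2 ≠ 0 := by simpa using hμ 0
  have h' : 2 * μ + 1 ≠ 0 := fun h0 => h (by linear_combination h0 / 2)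
  simp [gegenbauerC, poch, Finset.sum_range_succ] at h ⊢
  have e : μ + 2⁻¹ = (2 * μ + 1) / 2 := by ring
  rw [e]
  field_simp
  ring_nf
  simp

/-- generating-function coefficients -/
noncomputable def ser (μ w : ℂ) : PowerSeries ℂ :=
  PowerSeries.mk fun n => poch μ n / (n.factorial : ℂ) * w ^ n

open PowerSeries in
lemma ser_deriv (μ w : ℂ) :
    (1 - C w * X) * d⁄dX ℂ (ser μ w) = C (μ * w) * ser μ w := by
  have key : ∀ n : ℕ, poch μ (n + 1) / ((n + 1).factorial : ℂ) * ((n : ℂ) + 1) =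
      (μ + n) * (poch μ n / (n.factorial : ℂ)) := by
    intro n
    have h0 : (n.factorial : ℂ) ≠ 0 := by exact_mod_cast n.factorial_ne_zero
    have h1 : (n + 1 : ℂ) ≠ 0 := by exact_mod_cast n.succ_ne_zero
    rw [poch_succ, Nat.factorial_succ]; push_cast; field_simp
  ext n
  rw [sub_mul, one_mul, mul_assoc, map_sub, coeff_C_mul, coeff_C_mul]
  cases n with
  | zero =>
    simp [ser, coeff_derivative, poch]
  | succ n =>
    rw [coeff_succ_X_mul]
    simp only [ser, coeff_derivative, coeff_mk]
    have k1 := key n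
    have k2 := key (n + 1)
    push_cast at k2 ⊢
    linear_combination (w ^ (n + 1 + 1)) * k2

open PowerSeries in
lemma ser_prod_rec (μ w v x : ℂ) (hw : w * v = 1) (hx : w + v = 2 * x) (n : ℕ) :
    ((n : ℂ) + 2) * coeff (n + 2) (ser μ w * ser μ v) =
      2 * ((n : ℂ) + 1 + μ) * x * coeff (n + 1) (ser μ w * ser μ v)
      - ((n : ℂ) + 2 * μ) * coeff n (ser μ w * ser μ v) := by
  set f := ser μ w * ser μ v with hf
  have hCw : (C w : PowerSeries ℂ) * C v = 1 := by rw [← map_mul, hw, map_one]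
  have hCx : (C w : PowerSeries ℂ) + C v = C (2 * x) := by rw [← map_add, hx]
  have e : (1 - C (2 * x) * X + X * X) * d⁄dX ℂ f =
      (C (2 * μ * x) - C (2 * μ) * X) * f := by
    have d1 := ser_deriv μ w
    have d2 := ser_deriv μ v
    have : d⁄dX ℂ f = d⁄dX ℂ (ser μ w) * ser μ v + ser μ w * d⁄dX ℂ (ser μ v) := by
      rw [hf, Derivation.leibniz]; simp only [smul_eq_mul]; ring
    rw [this]
    have q : (1 - C (2 * x) * X + X * X : PowerSeries ℂ) = (1 - C w * X) * (1 - C v * X) := by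
      rw [← hCx]; linear_combination (-X * X) * hCw
    rw [q]
    have c1 : (C (2 * μ * x) : PowerSeries ℂ) = C μ * (C w + C v) := by
      rw [hCx, ← map_mul]; congr 1; ring
    have c2 : (C (2 * μ) : PowerSeries ℂ) = 2 * C μ := by
      rw [map_mul]; rfl
    rw [c1, c2, hf]
    rw [map_mul] at d1 d2
    linear_combination (1 - C v * X) * ser μ v * d1 + (1 - C w * X) * ser μ w * d2
      - 2 * C μ * X * ser μ w * ser μ v * hCw
  have := congrArg (coeff (n + 1)) e
  rw [add_mul, sub_mul, one_mul, mul_assoc, mul_assoc X, sub_mul, mul_assoc (C (2 * μ)), map_add, map_sub,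
    map_sub, coeff_C_mul, coeff_C_mul, coeff_C_mul, coeff_succ_X_mul, coeff_succ_X_mul,
    coeff_succ_X_mul] at this
  rw [coeff_derivative, coeff_derivative] at this
  cases n with
  | zero =>
    simp at this ⊢
    linear_combination this
  | succ n =>
    rw [coeff_succ_X_mul, coeff_derivative] at this
    push_cast at this ⊢
    linear_combination this

open PowerSeries in
lemma gegenbauer_eq_coeff (μ w v x : ℂ) (hw : w * v = 1) (hx : w + v = 2 * x)
    (hμ : ∀ m : ℕ, μ + 1 / 2 ≠ -(m : ℂ)) (n : ℕ) :
    gegenbauerC n μ x = coeff n (ser μ w * ser μ v) := by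
  induction n using Nat.twoStepInduction with
  | zero => simp [gegenbauer_zero, coeff_mul, ser, poch_zero]
  | one =>
    rw [gegenbauer_one μ x hμ]
    simp [coeff_mul, ser, poch, Finset.Nat.antidiagonal_succ]
    linear_combination -μ * hx
  | more n h1 h2 =>
    have r1 := gegenbauer_rec μ x hμ n
    have r2 := ser_prod_rec μ w v x hw hx n
    rw [h1, h2, ← r2] at r1
    have : (n : ℂ) + 2 ≠ 0 := by exact_mod_cast (Nat.succ_ne_zero (n + 1))
    exact mul_left_cancel₀ this r1

lemma gegenbauer_bound (μ : ℂ) (hμ : ∀ m : ℕ, μ + 1 / 2 ≠ -(m : ℂ)) (K : ℕ) (hK : ‖μ‖ ≤ K)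
    (x : ℝ) (hx : x ∈ Set.Icc (-1 : ℝ) 1) (n : ℕ) :
    ‖gegenbauerC n μ x‖ ≤ ((n : ℝ) + 1) ^ (2 * K + 1) := by
  set θ := Real.arccos x
  have hc : Complex.cos θ = x := by
    rw [← Complex.ofReal_cos, Real.cos_arccos hx.1 hx.2]
  set w := Complex.exp (θ * I)
  set v := Complex.exp (-θ * I)
  have hwv : w * v = 1 := by
    simp only [w, v]; rw [← Complex.exp_add]; simp
  have hs : w + v = 2 * x := by
    rw [← hc, Complex.cos]; simp only [w, v]; ring
  have nw : ‖w‖ = 1 := Complex.norm_exp_ofReal_mul_I θ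
  have nv : ‖v‖ = 1 := by
    have := Complex.norm_exp_ofReal_mul_I (-θ)
    push_cast at this; exact this
  rw [gegenbauer_eq_coeff μ w v x hwv hs hμ, PowerSeries.coeff_mul]
  refine (norm_sum_le _ _).trans ?_
  have : ∀ p ∈ Finset.HasAntidiagonal.antidiagonal n, ‖(PowerSeries.coeff p.1) (ser μ w) *
      (PowerSeries.coeff p.2) (ser μ v)‖ ≤ ((n : ℝ) + 1) ^ (2 * K) := by
    intro p hp
    rw [Finset.HasAntidiagonal.mem_antidiagonal] at hp
    simp only [ser, PowerSeries.coeff_mk, norm_mul, norm_pow, nw, nv, one_pow, mul_one]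
    rw [two_mul, pow_add]
    have i1 : (p.1 : ℝ) ≤ n := by exact_mod_cast (by omega)
    have i2 : (p.2 : ℝ) ≤ n := by exact_mod_cast (by omega)
    gcongr
    · exact (norm_poch_div_le μ K hK p.1).trans (by gcongr)
    · exact (norm_poch_div_le μ K hK p.2).trans (by gcongr)
  refine (Finset.sum_le_card_nsmul _ _ _ this).trans ?_
  simp [pow_succ, mul_comm]

/-- connection coefficients: `x^m = ∑ n, hcoef μ m n * (n + μ) * C_n^μ(x)` -/
noncomputable def hcoef (μ : ℂ) (m n : ℕ) : ℂ :=
  if n ≤ m ∧ 2 ∣ (m - n) then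
    (m.factorial : ℂ) / 2 ^ m /
      ((((m - n) / 2).factorial : ℂ) * poch μ (n + (m - n) / 2 + 1))
  else 0

lemma hcoef_add (μ : ℂ) (n k : ℕ) : hcoef μ (n + 2 * k) n =
    ((n + 2 * k).factorial : ℂ) / 2 ^ (n + 2 * k) / ((k.factorial : ℂ) * poch μ (n + k + 1)) := by
  rw [hcoef, if_pos ⟨by omega, ⟨k, by omega⟩⟩]
  have : (n + 2 * k - n) / 2 = k := by omega
  rw [this]

lemma hcoef_zero (μ : ℂ) (m n : ℕ) (h : ∀ k, m ≠ n + 2 * k) : hcoef μ m n = 0 := by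
  rw [hcoef, if_neg]
  rintro ⟨h1, k, h2⟩
  exact h k (by omega)

lemma hcoef_rec0 (μ : ℂ) (m : ℕ) : hcoef μ (m + 1) 0 = hcoef μ m 1 := by
  by_cases h : ∃ k, m = 1 + 2 * k
  · obtain ⟨k, rfl⟩ := h
    rw [hcoef_add, show 1 + 2 * k + 1 = 0 + 2 * (k + 1) by ring, hcoef_add]
    rw [show 0 + 2 * (k + 1) = 1 + 2 * k + 1 by ring, Nat.factorial_succ, Nat.factorial_succ k,
      show 0 + (k + 1) + 1 = 1 + k + 1 by ring, pow_succ]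
    have h1 : (k + 1 : ℂ) ≠ 0 := by exact_mod_cast k.succ_ne_zero
    push_cast
    have : (1 + 2 * (k : ℂ) + 1) = 2 * (k + 1) := by ring
    rw [this]
    simp only [div_eq_mul_inv, mul_inv]
    field_simp
  · push Not at h
    rw [hcoef_zero _ _ _ h, hcoef_zero]
    intro k hk
    exact h (k - 1) (by omega)

lemma hcoef_rec (μ : ℂ) (hμ : ∀ m : ℕ, μ ≠ -(m : ℂ)) (m n : ℕ) :
    ((n : ℂ) + 1 + μ) * hcoef μ (m + 1) (n + 1) =
      ((n : ℂ) + 1) / 2 * hcoef μ m n + ((n : ℂ) + 1 + 2 * μ) / 2 * hcoef μ m (n + 2) := by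
  by_cases h : ∃ k, m = n + 2 * k
  · obtain ⟨k, rfl⟩ := h
    have pk : ∀ k, poch μ k ≠ 0 := poch_ne_zero μ hμ
    have ps : ∀ k : ℕ, μ + k ≠ 0 := fun k h => hμ k (eq_neg_of_add_eq_zero_left h)
    have fs : ∀ k : ℕ, (k.factorial : ℂ) ≠ 0 := fun k => by exact_mod_cast k.factorial_ne_zero
    have ss : ∀ k : ℕ, (k : ℂ) + 1 ≠ 0 := fun k => by exact_mod_cast k.succ_ne_zero
    rw [show n + 2 * k + 1 = n + 1 + 2 * k by ring, hcoef_add, hcoef_add]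
    rw [show n + 1 + 2 * k = n + 2 * k + 1 by ring, Nat.factorial_succ,
      show n + 1 + k + 1 = n + k + 1 + 1 by ring, poch_succ _ (n + k + 1), pow_succ]
    have p1 := pk (n + k + 1)
    have p2 := ps (n + k + 1)
    cases k with
    | zero =>
      rw [hcoef_zero _ _ (n + 2) (by intro k; omega)]
      have := fs n
      simp only [mul_zero, add_zero, Nat.factorial_zero] at *
      push_cast at *
      have p3 : μ + ((n : ℂ) + 1) ≠ 0 := p2
      field_simp
      ring
    | succ k =>
      rw [show hcoef μ (n + 2 * (k + 1)) (n + 2) = hcoef μ (n + 2 + 2 * k) (n + 2) by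
        congr 1; ring, hcoef_add]
      rw [show n + 2 + 2 * k = n + 2 * (k + 1) by ring, show n + 2 + k + 1 = n + (k + 1) + 1 + 1 by ring,
        poch_succ _ (n + (k + 1) + 1), Nat.factorial_succ k]
      generalize poch μ (n + (k + 1) + 1) = P at *
      have f1 := fs k
      have s1 := ss k
      have e : μ + ((n + (k + 1) + 1 : ℕ) : ℂ) = μ + n + k + 2 := by push_cast; ring
      rw [e] at p2 ⊢
      push_cast
      field_simp
      ring
  · push Not at h
    rw [hcoef_zero _ _ _ h, hcoef_zero, hcoef_zero]
    · simp
    · intro k hk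
      exact h (k + 1) (by omega)
    · intro k hk
      exact h k (by omega)

lemma monomial_expansion (μ x : ℂ) (hμ : ∀ m : ℕ, μ ≠ -(m : ℂ))
    (hμ' : ∀ m : ℕ, μ + 1 / 2 ≠ -(m : ℂ)) (m : ℕ) :
    x ^ m = ∑ n ∈ Finset.range (m + 1), hcoef μ m n * ((n : ℂ) + μ) * gegenbauerC n μ x := by
  induction m with
  | zero =>
    have h0 : μ ≠ 0 := by simpa using hμ 0
    have := hcoef_add μ 0 0
    simp [poch] at this
    simp [gegenbauer_zero, this, h0]
  | succ m ih =>
    have hc : ∀ n : ℕ, ((n : ℂ) + 1 + μ) * (x * gegenbauerC (n + 1) μ x) =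
        ((n : ℂ) + 2) / 2 * gegenbauerC (n + 2) μ x + ((n : ℂ) + 2 * μ) / 2 * gegenbauerC n μ x := by
      intro n
      have := gegenbauer_rec μ x hμ' n
      linear_combination -this / 2
    have L : x ^ (m + 1) = hcoef μ m 0 * gegenbauerC 1 μ x / 2 +
        (∑ n ∈ Finset.range m, ((n : ℂ) + 2) / 2 * hcoef μ m (n + 1) * gegenbauerC (n + 2) μ x +
        ∑ n ∈ Finset.range m, ((n : ℂ) + 2 * μ) / 2 * hcoef μ m (n + 1) * gegenbauerC n μ x) := by
      rw [pow_succ', ih, Finset.mul_sum, Finset.sum_range_succ', add_comm, ← Finset.sum_add_distrib]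
      congr 1
      · rw [gegenbauer_zero, gegenbauer_one μ x hμ']; push_cast; ring
      · apply Finset.sum_congr rfl
        intro n _
        push_cast
        linear_combination hcoef μ m (n + 1) * hc n
    rw [L, Finset.sum_range_succ']
    have R : ∀ n : ℕ, hcoef μ (m + 1) (n + 1) * (((n + 1 : ℕ) : ℂ) + μ) * gegenbauerC (n + 1) μ x =
        ((n : ℂ) + 1) / 2 * hcoef μ m n * gegenbauerC (n + 1) μ x +
        (((n + 1 : ℕ) : ℂ) + 2 * μ) / 2 * hcoef μ m (n + 1 + 1) * gegenbauerC (n + 1) μ x := by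
      intro n
      push_cast
      linear_combination gegenbauerC (n + 1) μ x * hcoef_rec μ hμ m n
    simp only [R, Finset.sum_add_distrib]
    rw [Finset.sum_range_succ' (fun n : ℕ => ((n : ℂ) + 1) / 2 * hcoef μ m n * gegenbauerC (n + 1) μ x)]
    have Z := Finset.sum_range_succ' (fun n : ℕ => ((n : ℂ) + 2 * μ) / 2 * hcoef μ m (n + 1) *
      gegenbauerC n μ x) (m + 1)
    rw [Finset.sum_range_succ, Finset.sum_range_succ, hcoef_zero μ m (m + 1) (by intro k; omega),
      hcoef_zero μ m (m + 1 + 1) (by intro k; omega)] at Z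
    rw [hcoef_rec0]
    have W : ∀ n : ℕ, (((n + 1 : ℕ) : ℂ) + 1) / 2 * hcoef μ m (n + 1) * gegenbauerC (n + 1 + 1) μ x =
        ((n : ℂ) + 2) / 2 * hcoef μ m (n + 1) * gegenbauerC (n + 2) μ x := by
      intro n; push_cast; ring
    simp only [W]
    push_cast at Z ⊢
    simp only [zero_add] at Z ⊢
    linear_combination Z

lemma norm_poch_ge (μ : ℝ) (hμ : -(1 / 2) < μ) (N : ℕ) :
    (N.factorial : ℝ) / (2 * (N + 1)) ≤ ‖poch ((μ : ℂ) + 1) N‖ := by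
  induction N with
  | zero => simp [poch_zero]; norm_num
  | succ N ih =>
    rw [poch_succ, norm_mul]
    have h1 : ‖(μ : ℂ) + 1 + N‖ = μ + 1 + N := by
      have : (μ : ℂ) + 1 + N = ((μ + 1 + N : ℝ) : ℂ) := by push_cast; rfl
      rw [this, Complex.norm_real, Real.norm_of_nonneg]
      have : (0 : ℝ) ≤ N := by positivity
      linarith
    rw [h1]
    have h2 : (N : ℝ) + 1 / 2 ≤ μ + 1 + N := by linarith
    have h3 : ((N + 1).factorial : ℝ) / (2 * ((N + 1 : ℕ) + 1)) ≤
        (N.factorial : ℝ) / (2 * (N + 1)) * ((N : ℝ) + 1 / 2) := by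
      rw [Nat.factorial_succ]
      push_cast
      have hf : (0 : ℝ) < N.factorial := by positivity
      have : ((N : ℝ) + 1) / ((N : ℝ) + 1 + 1) ≤ ((N : ℝ) + 1 / 2) / (N + 1) := by
        rw [div_le_div_iff₀ (by positivity) (by positivity)]
        nlinarith [(Nat.cast_nonneg N : (0 : ℝ) ≤ N)]
      calc _ = (N.factorial : ℝ) / 2 * (((N : ℝ) + 1) / ((N : ℝ) + 1 + 1)) := by field_simp
        _ ≤ (N.factorial : ℝ) / 2 * (((N : ℝ) + 1 / 2) / (N + 1)) := by gcongr
        _ = _ := by field_simp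
    exact h3.trans (mul_le_mul ih h2 (by positivity) (norm_nonneg _))

lemma norm_hcoef_le (μ : ℝ) (hμ : -(1 / 2) < μ) (hμ0 : μ ≠ 0) (n k : ℕ) :
    ‖hcoef μ (n + 2 * k) n‖ ≤ 2 * ((n + 2 * k : ℕ) + 1) / |μ| := by
  rw [hcoef_add, poch_succ']
  simp only [norm_div, norm_mul, norm_pow, Complex.norm_natCast, Complex.norm_real, Real.norm_eq_abs]
  have h := norm_poch_ge μ hμ (n + k)
  set P := ‖poch ((μ : ℂ) + 1) (n + k)‖
  have ch : ((n + 2 * k).factorial : ℝ) ≤ 2 ^ (n + 2 * k) * (k.factorial * (n + k).factorial) := by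
    have c1 : (n + 2 * k).choose k ≤ 2 ^ (n + 2 * k) := Nat.choose_le_two_pow _ _
    have c2 := Nat.choose_mul_factorial_mul_factorial (show k ≤ n + 2 * k by omega)
    rw [show n + 2 * k - k = n + k by omega] at c2
    have : (n + 2 * k).factorial ≤ 2 ^ (n + 2 * k) * (k.factorial * (n + k).factorial) := by
      rw [← c2, mul_assoc]; gcongr
    exact_mod_cast this
  have hP : 0 < P := lt_of_lt_of_le (by positivity) h
  have hm : 0 < |μ| := abs_pos.mpr hμ0
  rw [div_le_iff₀ (by positivity)] at h
  rw [show ‖(2 : ℂ)‖ = 2 by simp]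
  rw [div_div, div_le_div_iff₀ (by positivity) hm]
  have h' : ((n + k).factorial : ℝ) ≤ P * (2 * ((n + 2 * k : ℕ) + 1)) := by
    refine h.trans ?_
    push_cast
    gcongr
    have : (0 : ℝ) ≤ k := by positivity
    linarith
  calc _ ≤ 2 ^ (n + 2 * k) * (k.factorial * (P * (2 * ((n + 2 * k : ℕ) + 1)))) * |μ| := by
        refine mul_le_mul_of_nonneg_right (ch.trans ?_) hm.le
        gcongr
    _ = _ := by ring

lemma binomial_hasSum (ν y : ℂ) (hy : ‖y‖ < 1) :
    HasSum (fun m : ℕ => poch ν m / (m.factorial : ℂ) * y ^ m) (1 / (1 - y) ^ ν) := by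
  have h := (Complex.one_div_one_sub_cpow_hasFPowerSeriesOnBall_zero ν).hasSum (y := y) (by
    simpa [enorm_eq_nnnorm, ← NNReal.coe_lt_coe] using hy)
  simp only [zero_add] at h
  suffices hf : (fun m : ℕ => poch ν m / (m.factorial : ℂ) * y ^ m) = fun m : ℕ =>
      (FormalMultilinearSeries.ofScalars ℂ (fun n : ℕ => Ring.choose (ν + n - 1) n) m) fun _ => y by
    rw [hf]; exact h
  funext m
  rw [FormalMultilinearSeries.ofScalars_apply_eq, ← Ring.multichoose_eq, smul_eq_mul]
  congr 1
  have := Ring.factorial_nsmul_multichoose_eq_ascPochhammer ν m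
  have h0 : (m.factorial : ℂ) ≠ 0 := by exact_mod_cast m.factorial_ne_zero
  have e : poch ν m = Polynomial.smeval (ascPochhammer ℕ m) ν := by
    induction m with
    | zero => simp [poch_zero]
    | succ m ih =>
      rw [poch_succ, ascPochhammer_succ_right, Polynomial.smeval_mul, Polynomial.smeval_add,
        Polynomial.smeval_X, Polynomial.smeval_natCast,
        ih (Ring.factorial_nsmul_multichoose_eq_ascPochhammer ν m)
          (by exact_mod_cast m.factorial_ne_zero)]
      simp
  rw [e, ← this, nsmul_eq_mul]
  field_simp

lemma poly_geom_bound (P : ℕ) (t s : ℝ) (ht : 0 < t) (hts : t < s) :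
    ∃ B : ℝ, ∀ m : ℕ, ((m : ℝ) + 1) ^ P * t ^ m ≤ B * s ^ m := by
  have hs : 0 < s := ht.trans hts
  have hr : ‖t / s‖ < 1 := by
    rw [Real.norm_of_nonneg (by positivity), div_lt_one hs]; exact hts
  have S := summable_pow_mul_geometric_of_norm_lt_one P hr
  refine ⟨(∑' n : ℕ, (n : ℝ) ^ P * (t / s) ^ n) * (s / t), fun m => ?_⟩
  have := S.le_tsum (m + 1) (fun j _ => by positivity)
  calc ((m : ℝ) + 1) ^ P * t ^ m
      = (((m + 1 : ℕ) : ℝ) ^ P * (t / s) ^ (m + 1)) * (s / t) * s ^ m := by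
        push_cast; rw [pow_succ (t / s), div_pow]; field_simp
    _ ≤ _ := by gcongr

lemma double_summable (ν : ℂ) (μ : ℝ) (hμ : -(1 / 2) < μ) (hμ0 : μ ≠ 0)
    (x : ℝ) (hx : x ∈ Set.Icc (-1 : ℝ) 1) (t : ℝ) (ht0 : 0 < t) (ht1 : t < 1)
    (hμ' : ∀ m : ℕ, (μ : ℂ) + 1 / 2 ≠ -(m : ℂ)) :
    Summable (fun p : ℕ × ℕ => poch ν (p.1 + 2 * p.2) / ((p.1 + 2 * p.2).factorial : ℂ) *
      (t : ℂ) ^ (p.1 + 2 * p.2) * (hcoef μ (p.1 + 2 * p.2) p.1 * ((p.1 : ℂ) + μ) *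
        gegenbauerC p.1 μ x)) := by
  obtain ⟨K, hK⟩ := exists_nat_ge ‖ν‖
  obtain ⟨M, hM⟩ := exists_nat_ge ‖(μ : ℂ)‖
  set s := (1 + t) / 2 with hs
  have s0 : 0 < s := by positivity
  have s1 : s < 1 := by rw [hs]; linarith
  obtain ⟨B, hB⟩ := poly_geom_bound (K + 1 + 1 + (2 * M + 1)) t s ht0 (by rw [hs]; linarith)
  have S : Summable (fun p : ℕ × ℕ => (2 / |μ| * (M + 1) * B) * (s ^ p.1 * (s ^ 2) ^ p.2)) := by
    apply Summable.mul_left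
    apply Summable.mul_of_nonneg (summable_geometric_of_lt_one s0.le s1)
      (summable_geometric_of_lt_one (by positivity) (by nlinarith))
    · intro i; positivity
    · intro i; positivity
  refine S.of_norm_bounded ?_
  rintro ⟨n, k⟩
  simp only
  have b1 := norm_poch_div_le ν K hK (n + 2 * k)
  have b2 := norm_hcoef_le μ hμ hμ0 n k
  have b3 := gegenbauer_bound μ hμ' M hM x hx n
  have b0 := hB (n + 2 * k)
  set m := n + 2 * k with hm
  have nm : (n : ℝ) ≤ m := by exact_mod_cast (by omega)
  have b3' : ‖gegenbauerC n μ x‖ ≤ ((m : ℝ) + 1) ^ (2 * M + 1) := b3.trans (by gcongr)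
  have b4 : ‖(n : ℂ) + μ‖ ≤ (M + 1) * ((m : ℝ) + 1) := by
    refine (norm_add_le _ _).trans ?_
    rw [Complex.norm_natCast]
    nlinarith [(Nat.cast_nonneg M : (0 : ℝ) ≤ M), (Nat.cast_nonneg m : (0 : ℝ) ≤ m)]
  rw [norm_mul, norm_mul, norm_mul, norm_mul, norm_pow, Complex.norm_real, Real.norm_of_nonneg ht0.le]
  calc _ ≤ ((m : ℝ) + 1) ^ K * t ^ m * (2 * ((m : ℝ) + 1) / |μ| * ((M + 1) * ((m : ℝ) + 1)) *
        ((m : ℝ) + 1) ^ (2 * M + 1)) := by gcongr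
    _ = 2 / |μ| * (M + 1) * (((m : ℝ) + 1) ^ (K + 1 + 1 + (2 * M + 1)) * t ^ m) := by
        rw [pow_add _ (K + 1 + 1), pow_succ _ (K + 1), pow_succ _ K]; ring
    _ ≤ 2 / |μ| * (M + 1) * (B * s ^ m) := by gcongr
    _ = _ := by rw [hm, pow_add, pow_mul]; ring

lemma main_series (ν : ℂ) (μ : ℝ) (hμ : -(1 / 2) < μ) (hμ0 : μ ≠ 0)
    (x : ℝ) (hx : x ∈ Set.Icc (-1 : ℝ) 1) (t : ℝ) (ht0 : 0 < t) (ht1 : t < 1)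
    (hμn : ∀ m : ℕ, (μ : ℂ) ≠ -(m : ℂ))
    (hμ' : ∀ m : ℕ, (μ : ℂ) + 1 / 2 ≠ -(m : ℂ)) :
    1 / (1 - (x : ℂ) * t) ^ ν =
    ∑' n : ℕ, ∑' k : ℕ, poch ν (n + 2 * k) / ((n + 2 * k).factorial : ℂ) *
      (t : ℂ) ^ (n + 2 * k) * (hcoef μ (n + 2 * k) n * ((n : ℂ) + μ) *
        gegenbauerC n μ x) := by
  have Sg := double_summable ν μ hμ hμ0 x hx t ht0 ht1 hμ'
  set G : ℕ × ℕ → ℂ := fun p => poch ν p.1 / (p.1.factorial : ℂ) *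
      (t : ℂ) ^ p.1 * (hcoef μ p.1 p.2 * ((p.2 : ℂ) + μ) * gegenbauerC p.2 μ x) with hG
  set Φ : ℕ × ℕ → ℕ × ℕ := fun p => (p.1 + 2 * p.2, p.1) with hΦ
  have inj : Function.Injective Φ := by
    rintro ⟨a, b⟩ ⟨c, d⟩ h
    simp only [hΦ, Prod.mk.injEq] at h ⊢
    omega
  have supp : ∀ p, p ∉ Set.range Φ → G p = 0 := by
    rintro ⟨m, n⟩ hp
    simp only [hG]
    rw [hcoef_zero]
    · simp
    · intro k hk
      exact hp ⟨(n, k), by simp [hΦ, hk]⟩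
  have SG : Summable G := (inj.summable_iff supp).mp Sg
  have e1 := inj.tsum_eq (f := G) (Function.support_subset_iff'.mpr supp)
  rw [SG.tsum_prod] at e1
  have e2 : ∑' c, G (Φ c) = ∑' n, ∑' k, G (Φ (n, k)) := Summable.tsum_prod Sg
  rw [e2] at e1
  have hy : ‖(x : ℂ) * t‖ < 1 := by
    rw [norm_mul, Complex.norm_real, Complex.norm_real, Real.norm_eq_abs, Real.norm_of_nonneg ht0.le]
    have := abs_le.mpr hx
    nlinarith [abs_nonneg x]
  rw [← (binomial_hasSum ν _ hy).tsum_eq]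
  refine Eq.trans ?_ e1.symm
  apply tsum_congr
  intro m
  rw [tsum_eq_sum (s := Finset.range (m + 1))]
  · rw [mul_pow, monomial_expansion μ x hμn hμ' m]
    simp only [hG]
    rw [← Finset.mul_sum]
    ring
  · intro n hn
    simp only [hG]
    rw [hcoef_zero]
    · simp
    · intro k hk
      simp at hn; omega

lemma Gamma_add_nat_poch (a : ℂ) (ha : ∀ m : ℕ, a ≠ -(m : ℂ)) (n : ℕ) :
    Complex.Gamma (n + a) = Complex.Gamma a * poch a n := by
  induction n with
  | zero => simp [poch_zero]
  | succ n ih =>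
    have h : (n : ℂ) + a ≠ 0 := fun h => ha n (by linear_combination h)
    rw [show ((n + 1 : ℕ) : ℂ) + a = (n + a) + 1 by push_cast; ring, Complex.Gamma_add_one _ h, ih,
      poch_succ]
    ring

lemma cpow_sq_half (r : ℝ) (hr : 0 < r) (s : ℂ) : ((r : ℂ) ^ 2) ^ (s / 2) = (r : ℂ) ^ s := by
  have h : (r : ℂ) ≠ 0 := by exact_mod_cast hr.ne'
  rw [Complex.cpow_def_of_ne_zero h, Complex.cpow_def_of_ne_zero (pow_ne_zero 2 h),
    ← Complex.ofReal_pow, ← Complex.ofReal_log (by positivity), ← Complex.ofReal_log hr.le,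
    Real.log_pow]
  push_cast
  congr 1
  ring

lemma inner_series (ν : ℂ) (μ : ℂ) (hμn : ∀ m : ℕ, μ ≠ -(m : ℂ)) (t c : ℂ) (n : ℕ) :
    ∑' k : ℕ, poch ν (n + 2 * k) / ((n + 2 * k).factorial : ℂ) *
      t ^ (n + 2 * k) * (hcoef μ (n + 2 * k) n * ((n : ℂ) + μ) * c) =
    t ^ n / 2 ^ n * (poch ν n / poch μ n) * c *
      hyp2F1 ((n + ν + 1) / 2) ((n + ν) / 2) (n + μ + 1) (t ^ 2) := by
  rw [hyp2F1, ← tsum_mul_left]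
  apply tsum_congr
  intro k
  rw [poch_dup, hcoef_add, show n + k + 1 = n + (1 + k) by ring, poch_add μ, poch_add (μ + n),
    poch_add ν, add_comm (n : ℂ) ν]
  have e : (n : ℂ) + μ + 1 = μ + n + ((1 : ℕ) : ℂ) := by push_cast; ring
  rw [e]
  have f0 : ((n + 2 * k).factorial : ℂ) ≠ 0 := by exact_mod_cast (n + 2 * k).factorial_ne_zero
  have f1 : (k.factorial : ℂ) ≠ 0 := by exact_mod_cast k.factorial_ne_zero
  have p0 := poch_ne_zero μ hμn n
  have hn : μ + n ≠ 0 := fun h => hμn n (by linear_combination h)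
  have p1 : poch (μ + n + ((1 : ℕ) : ℂ)) k ≠ 0 := by
    apply poch_ne_zero
    intro m hm
    apply hμn (n + 1 + m)
    push_cast at hm ⊢
    linear_combination hm
  have p2 : poch (μ + n) 1 = n + μ := by simp [poch, add_comm]
  have hn' : (n : ℂ) + μ ≠ 0 := by rwa [add_comm]
  rw [p2, pow_add, pow_mul, pow_add, pow_mul, show (2 : ℂ) ^ 2 = 4 by norm_num]
  generalize poch (μ + n + ((1 : ℕ) : ℂ)) k = P at *
  generalize (n : ℂ) + μ = Q at *
  field_simp

lemma prefactor (ν : ℂ) (hν : ∀ m : ℕ, ν ≠ -(m : ℂ)) (μ : ℂ) (hμ : ∀ m : ℕ, μ ≠ -(m : ℂ))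
    (ρ : ℝ) (hρ0 : 0 < ρ) (hρ1 : ρ < 1) (n : ℕ) :
    Complex.Gamma μ * Complex.exp (Real.pi * I * (μ - ν + 1 / 2)) /
        ((Real.sqrt Real.pi : ℂ) * Complex.Gamma ν * (ρ : ℂ) ^ (μ + 1 / 2) *
          (1 - (ρ : ℂ) ^ 2) ^ (ν - μ - 1 / 2)) *
    ((n + μ) * ((Real.sqrt Real.pi : ℂ) * Complex.exp (Real.pi * I * (ν - μ - 1 / 2)) *
      Complex.Gamma (n + ν) *
      (((1 + (ρ : ℂ) ^ 2) / (2 * (ρ : ℂ))) ^ 2 - 1) ^ ((ν - μ - 1 / 2) / 2) /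
      ((2 : ℂ) ^ (n + (μ + 1 / 2)) * Complex.Gamma (n + μ + 1) *
        ((1 + (ρ : ℂ) ^ 2) / (2 * (ρ : ℂ))) ^ (n + ν)))) =
    1 / (1 + (ρ : ℂ) ^ 2) ^ ν * ((2 * ρ / (1 + ρ ^ 2)) ^ n / 2 ^ n * (poch ν n / poch μ n)) := by
  have hρ : (ρ : ℂ) ≠ 0 := by exact_mod_cast hρ0.ne'
  have r1 : 0 < 1 - ρ ^ 2 := by nlinarith
  have r2 : 0 < 1 + ρ ^ 2 := by positivity
  have c2 : (1 + (ρ : ℂ) ^ 2) ≠ 0 := by exact_mod_cast r2.ne'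
  have c1 : (1 - (ρ : ℂ) ^ 2) ≠ 0 := by exact_mod_cast r1.ne'
  have hdiv : ∀ (a : ℝ), 0 < a → ∀ s : ℂ,
      ((a : ℂ) / (2 * ρ)) ^ s = (a : ℂ) ^ s / (2 ^ s * (ρ : ℂ) ^ s) := by
    intro a ha s
    have d : (2 * ρ : ℂ) = ((2 * ρ : ℝ) : ℂ) := by push_cast; rfl
    rw [d, Complex.div_cpow_ofReal_nonneg ha.le (by positivity), Complex.ofReal_mul,
      Complex.mul_cpow_ofReal_nonneg (by norm_num) hρ0.le]
    norm_num
  have Hz : ((1 + (ρ : ℂ) ^ 2) / (2 * (ρ : ℂ))) ^ ν = (1 + (ρ : ℂ) ^ 2) ^ ν / (2 ^ ν * (ρ : ℂ) ^ ν) := by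
    have := hdiv _ r2 ν
    push_cast at this
    exact this
  set s := ν - μ - 1 / 2 with hs
  have Hq : (((1 + (ρ : ℂ) ^ 2) / (2 * (ρ : ℂ))) ^ 2 - 1) ^ (s / 2) =
      (1 - (ρ : ℂ) ^ 2) ^ s / (2 ^ s * (ρ : ℂ) ^ s) := by
    have h1 := hdiv _ r1 s
    push_cast at h1
    rw [← h1]
    have h2 := cpow_sq_half ((1 - ρ ^ 2) / (2 * ρ)) (by positivity) s
    push_cast at h2
    rw [← h2]
    congr 1
    field_simp
    ring
  have hν' : ν = s + (μ + 1 / 2) := by rw [hs]; ring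
  have two : (2 : ℂ) ≠ 0 := two_ne_zero
  have n1 : (2 : ℂ) ^ ν = 2 ^ s * 2 ^ (μ + 1 / 2) := by
    rw [← Complex.cpow_add _ _ two]; congr 1
  have n2 : (ρ : ℂ) ^ ν = (ρ : ℂ) ^ s * (ρ : ℂ) ^ (μ + 1 / 2) := by
    rw [← Complex.cpow_add _ _ hρ]; congr 1
  have zne : (1 + (ρ : ℂ) ^ 2) / (2 * (ρ : ℂ)) ≠ 0 := by
    apply div_ne_zero c2; exact mul_ne_zero two hρ
  have hexp : Complex.exp (Real.pi * I * (μ - ν + 1 / 2)) * Complex.exp (Real.pi * I * s) = 1 := by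
    rw [← Complex.exp_add, hs, ← Complex.exp_zero]; congr 1; ring
  rw [Hq, Complex.cpow_add _ _ zne, Complex.cpow_add _ _ two, Complex.cpow_natCast,
    Complex.cpow_natCast, Hz, n1, n2, Gamma_add_nat_poch ν hν]
  have hn : (n : ℂ) + μ ≠ 0 := fun h => hμ n (by linear_combination h)
  rw [Complex.Gamma_add_one _ hn, Gamma_add_nat_poch μ hμ]
  have g1 : Complex.Gamma ν ≠ 0 := Complex.Gamma_ne_zero hν
  have g2 : Complex.Gamma μ ≠ 0 := Complex.Gamma_ne_zero hμ
  have pm := poch_ne_zero μ hμ n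
  have sp : (Real.sqrt Real.pi : ℂ) ≠ 0 := by
    exact_mod_cast (Real.sqrt_pos.mpr Real.pi_pos).ne'
  have k1 : (2 : ℂ) ^ s ≠ 0 := by simp [Complex.cpow_eq_zero_iff]
  have k2 : (2 : ℂ) ^ (μ + 1 / 2) ≠ 0 := by simp [Complex.cpow_eq_zero_iff]
  have k3 : (ρ : ℂ) ^ s ≠ 0 := by simp [Complex.cpow_eq_zero_iff, hρ]
  have k4 : (ρ : ℂ) ^ (μ + 1 / 2) ≠ 0 := by simp [Complex.cpow_eq_zero_iff, hρ]
  have k5 : (1 - (ρ : ℂ) ^ 2) ^ s ≠ 0 := by simp [Complex.cpow_eq_zero_iff, c1]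
  have k6 : (1 + (ρ : ℂ) ^ 2) ^ ν ≠ 0 := by simp [Complex.cpow_eq_zero_iff, c2]
  clear_value s
  generalize (2 : ℂ) ^ s = A1 at *
  generalize (2 : ℂ) ^ (μ + 1 / 2) = A2 at *
  generalize (ρ : ℂ) ^ s = A3 at *
  generalize (ρ : ℂ) ^ (μ + 1 / 2) = A4 at *
  generalize (1 - (ρ : ℂ) ^ 2) ^ s = A5 at *
  generalize (1 + (ρ : ℂ) ^ 2) ^ ν = A6 at *
  generalize Complex.exp (Real.pi * I * (μ - ν + 1 / 2)) = E1 at *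
  generalize Complex.exp (Real.pi * I * s) = E2 at *
  generalize (1 + (ρ : ℂ) ^ 2) = R at *
  generalize (n : ℂ) + μ = Q at *
  generalize (Real.sqrt Real.pi : ℂ) = S at *
  simp only [div_pow, mul_pow]
  field_simp
  linear_combination poch ν n * hexp

/-- the alternate form of the generalized generating function,
with `z = (1+ρ²)/(2ρ)` for `0 < ρ < 1`. -/
theorem gegenbauer_generating_generalization_rho
    (ν : ℂ) (hν : ∀ m : ℕ, ν ≠ -(m : ℂ))
    (μ : ℝ) (hμ1 : -(1 / 2) < μ) (hμ2 : μ ≠ 0)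
    (x : ℝ) (hx : x ∈ Set.Icc (-1 : ℝ) 1)
    (ρ : ℝ) (hρ0 : 0 < ρ) (hρ1 : ρ < 1) :
    1 / (1 + (ρ : ℂ) ^ 2 - 2 * (ρ : ℂ) * (x : ℂ)) ^ ν =
      Complex.Gamma (μ : ℂ) * Complex.exp (Real.pi * I * ((μ : ℂ) - ν + 1 / 2)) /
        ((Real.sqrt Real.pi : ℂ) * Complex.Gamma ν * (ρ : ℂ) ^ ((μ : ℂ) + 1 / 2) *
          (1 - (ρ : ℂ) ^ 2) ^ (ν - (μ : ℂ) - 1 / 2)) *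
        ∑' n : ℕ,
          ((n : ℂ) + (μ : ℂ)) *
            legendreQ ((n : ℂ) + (μ : ℂ) - 1 / 2) (ν - (μ : ℂ) - 1 / 2)
              ((1 + (ρ : ℂ) ^ 2) / (2 * (ρ : ℂ))) *
            gegenbauerC n (μ : ℂ) (x : ℂ) := by
  have hμn : ∀ m : ℕ, (μ : ℂ) ≠ -(m : ℂ) := by
    intro m h
    have h' : μ = -(m : ℝ) := by exact_mod_cast h
    rcases Nat.eq_zero_or_pos m with rfl | hm
    · exact hμ2 (by simpa using h')
    · have : (1 : ℝ) ≤ m := by exact_mod_cast hm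
      linarith
  have hμ' : ∀ m : ℕ, (μ : ℂ) + 1 / 2 ≠ -(m : ℂ) := by
    intro m h
    have h' : μ + 1 / 2 = -(m : ℝ) := by
      apply Complex.ofReal_injective
      push_cast
      exact h
    have : (0 : ℝ) ≤ m := by positivity
    linarith
  have hρ : (ρ : ℂ) ≠ 0 := by exact_mod_cast hρ0.ne'
  have r2 : 0 < 1 + ρ ^ 2 := by positivity
  have c2 : (1 + (ρ : ℂ) ^ 2) ≠ 0 := by exact_mod_cast r2.ne'
  have t0 : 0 < 2 * ρ / (1 + ρ ^ 2) := by positivity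
  have t1 : 2 * ρ / (1 + ρ ^ 2) < 1 := by
    rw [div_lt_one r2]
    nlinarith [sq_pos_of_pos (show 0 < 1 - ρ by linarith)]
  have key := main_series ν μ hμ1 hμ2 x hx _ t0 t1 hμn hμ'
  simp only [inner_series ν (μ : ℂ) hμn] at key
  have xt : 0 ≤ 1 - x * (2 * ρ / (1 + ρ ^ 2)) := by
    have := hx.2
    nlinarith
  have lhs : (1 + (ρ : ℂ) ^ 2 - 2 * (ρ : ℂ) * (x : ℂ)) ^ ν = (1 + (ρ : ℂ) ^ 2) ^ ν *
      (1 - (x : ℂ) * ((2 * ρ / (1 + ρ ^ 2) : ℝ) : ℂ)) ^ ν := by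
    have h := Complex.mul_cpow_ofReal_nonneg r2.le xt ν
    push_cast at h ⊢
    rw [← h]
    congr 1
    field_simp
  rw [lhs, ← one_div_mul_one_div, key, ← tsum_mul_left, ← tsum_mul_left]
  apply tsum_congr
  intro n
  have pf := prefactor ν hν μ hμn ρ hρ0 hρ1 n
  rw [legendreQ]
  rw [show (n : ℂ) + μ - 1 / 2 + (ν - μ - 1 / 2) + 1 = n + ν by ring,
    show (n : ℂ) + μ - 1 / 2 + (ν - μ - 1 / 2) + 2 = n + ν + 1 by ring,
    show (n : ℂ) + μ - 1 / 2 + 1 = n + (μ + 1 / 2) by ring,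
    show (n : ℂ) + μ - 1 / 2 + 3 / 2 = n + μ + 1 by ring,
    show 1 / ((1 + (ρ : ℂ) ^ 2) / (2 * (ρ : ℂ))) ^ 2 = ((2 * ρ / (1 + ρ ^ 2) : ℝ) : ℂ) ^ 2 by
      push_cast; field_simp]
  push_cast at pf ⊢
  linear_combination (-(gegenbauerC n μ x) *
    hyp2F1 ((n + ν + 1) / 2) ((n + ν) / 2) (n + μ + 1) ((2 * ρ / (1 + ρ ^ 2)) ^ 2)) * pf
end

section
/- Let d, k ∈ ℕ, and define G_k^d : (ℝ^d × ℝ^d) \ {(x,x) : x ∈ ℝ^d} → ℝ by G_k^d(x,x') := ((−1)^{k+d/2+1} ‖x−x'‖^{2k−d})/((k−1)! (k−d/2)! 2^{2k−1} π^{d/2}) · (log‖x−x'‖ − β_{p,d}) if d is even and k ≥ d/2 (with p = k − d/2), and G_k^d(x,x') := (Γ(d/2−k) ‖x−x'‖^{2k−d})/((k−1)! 2^{2k} π^{d/2}) otherwise, where β_{p,d} := (1/2)[H_p + H_{d/2+p−1} − H_{d/2−1}] and H_j := Σ_{i=1}^j 1/i is the j-th harmonic number. Then G_k^d is a fundamental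 solution for (−Δ)^k on ℝ^d: for every x' ∈ ℝ^d and every smooth compactly supported function φ : ℝ^d → ℝ, ∫_{ℝ^d} G_k^d(x,x') ((−Δ)^k φ)(x) dx = φ(x'), where Δφ := Σ_{i=1}^d ∂²φ/∂x_i² and (−Δ)^k denotes the k-fold iterate of −Δ. -/
open scoped BigOperators

/-- The `j`-th harmonic number `H_j = ∑_{i=1}^j 1/i`. -/
noncomputable def harmonicNum (j : ℕ) : ℝ := ∑ i ∈ Finset.range j, (1 : ℝ) / (i + 1)

/-- `β_{p,d} = (1/2)[H_p + H_{d/2+p-1} - H_{d/2-1}]`. -/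
noncomputable def betaConst (p d : ℕ) : ℝ :=
  (1 / 2) * (harmonicNum p + harmonicNum (d / 2 + p - 1) - harmonicNum (d / 2 - 1))

/-- The Laplacian `Δf = ∑_{i=1}^d ∂²f/∂x_i²` on `ℝ^d`. -/
noncomputable def laplacian {d : ℕ} (f : EuclideanSpace ℝ (Fin d) → ℝ)
    (x : EuclideanSpace ℝ (Fin d)) : ℝ :=
  ∑ i : Fin d,
    fderiv ℝ (fun y => fderiv ℝ f y (EuclideanSpace.single i 1)) x (EuclideanSpace.single i 1)

/-- The `k`-fold iterate of `-Δ`. -/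
noncomputable def negLapIter {d : ℕ} (k : ℕ) (f : EuclideanSpace ℝ (Fin d) → ℝ) :
    EuclideanSpace ℝ (Fin d) → ℝ :=
  (fun g : EuclideanSpace ℝ (Fin d) → ℝ => fun x => -(laplacian g x))^[k] f

/-- A power-law / logarithmic fundamental solution `G_k^d` of the polyharmonic equation. -/
noncomputable def polyharmonicG (d k : ℕ) (x x' : EuclideanSpace ℝ (Fin d)) : ℝ :=
  if Even d ∧ d / 2 ≤ k then
    (-1 : ℝ) ^ (k + d / 2 + 1) * ‖x - x'‖ ^ (2 * (k : ℝ) - (d : ℝ)) /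
        ((Nat.factorial (k - 1) : ℝ) * (Nat.factorial (k - d / 2) : ℝ) * 2 ^ (2 * k - 1) *
          Real.pi ^ (d / 2)) *
      (Real.log ‖x - x'‖ - betaConst (k - d / 2) d)
  else
    Real.Gamma ((d : ℝ) / 2 - (k : ℝ)) * ‖x - x'‖ ^ (2 * (k : ℝ) - (d : ℝ)) /
      ((Nat.factorial (k - 1) : ℝ) * 2 ^ (2 * k) * Real.pi ^ ((d : ℝ) / 2))

namespace PolyAux

open MeasureTheory Filter Topology Set

/-- `s ^ a * (A log s + B)`. -/
noncomputable def logPow (a A B s : ℝ) : ℝ := s ^ a * (A * Real.log s + B)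

lemma logPow_hasDerivAt (a A B : ℝ) {s : ℝ} (hs : 0 < s) :
    HasDerivAt (logPow a A B) (logPow (a - 1) (a * A) (a * B + A) s) s := by
  have h1 := Real.hasDerivAt_rpow_const (x := s) (p := a) (Or.inl hs.ne')
  have h2 := ((Real.hasDerivAt_log hs.ne').const_mul A).add_const B
  have h3 := h1.mul h2
  refine h3.congr_deriv ?_
  unfold logPow
  have : s ^ a = s ^ (a - 1) * s := by
    rw [← Real.rpow_add_one hs.ne']; congr 1; ring
  rw [this]
  field_simp
  ring

lemma logPow_bound (a b A B R : ℝ) (hab : b < a) (hR : 1 ≤ R) :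
    ∃ C : ℝ, ∀ s : ℝ, 0 < s → s ≤ R → |logPow a A B s| ≤ C * s ^ b := by
  refine ⟨(|A| / (a - b) + |B|) + R ^ (a - b) * (|A| * R + |B|), fun s hs hsR => ?_⟩
  have ht : 0 < a - b := by linarith
  have h1 : s ^ a = s ^ b * s ^ (a - b) := by rw [← Real.rpow_add hs]; congr 1; ring
  have hb : 0 < s ^ b := Real.rpow_pos_of_pos hs b
  unfold logPow
  rw [h1, mul_assoc, abs_mul, abs_of_pos hb, mul_comm]
  apply mul_le_mul_of_nonneg_right _ hb.le
  have hR0 : 0 ≤ R ^ (a - b) * (|A| * R + |B|) := by positivity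
  have hA0 : 0 ≤ |A| / (a - b) + |B| := by positivity
  have hp : 0 < s ^ (a - b) := Real.rpow_pos_of_pos hs _
  rcases le_total s 1 with h | h
  · have h2 := (Real.abs_log_mul_self_rpow_lt s (a - b) hs h ht).le
    have h3 : s ^ (a - b) ≤ 1 := Real.rpow_le_one hs.le h ht.le
    have : s ^ (a - b) * (A * Real.log s + B)
        = A * (Real.log s * s ^ (a - b)) + s ^ (a - b) * B := by ring
    rw [this]
    calc _ ≤ |A * (Real.log s * s ^ (a - b))| + |s ^ (a - b) * B| := abs_add_le _ _
      _ ≤ |A| * (1 / (a - b)) + 1 * |B| := by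
        rw [abs_mul A, abs_mul _ B, abs_of_pos hp]
        gcongr
      _ = |A| / (a - b) + |B| := by ring
      _ ≤ _ := by linarith
  · have h3 : s ^ (a - b) ≤ R ^ (a - b) := Real.rpow_le_rpow hs.le hsR ht.le
    have h4 : |Real.log s| ≤ R := by
      rw [abs_of_nonneg (Real.log_nonneg h)]
      linarith [Real.log_le_sub_one_of_pos hs]
    rw [abs_mul, abs_of_pos hp]
    have h5 : |A * Real.log s + B| ≤ |A| * R + |B| := by
      refine (abs_add_le _ _).trans ?_
      rw [abs_mul]; gcongr
    have : s ^ (a - b) * |A * Real.log s + B| ≤ R ^ (a - b) * (|A| * R + |B|) := by gcongr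
    linarith

variable {d : ℕ}

/-- Generic dominated convergence for kernels. -/
lemma kernel_tendsto (hd : 1 ≤ d) (Ψ : EuclideanSpace ℝ (Fin d) → ℝ) (hΨ : Continuous Ψ)
    (hs : HasCompactSupport Ψ) (h : ℝ → ℝ → ℝ) (h0 : ℝ → ℝ) (b : ℝ) (hb : -(d : ℝ) / 2 < b)
    (hcont : ∀ ε, 0 < ε → ContinuousOn (h ε) (Ici 0))
    (hbd : ∀ R : ℝ, 1 ≤ R → ∃ C : ℝ, ∀ ε r : ℝ, 0 < ε → ε ≤ 1 → 0 < r → r ≤ R →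
      |h ε r| ≤ C * r ^ b)
    (hlim : ∀ r : ℝ, 0 < r → Tendsto (fun ε => h ε r) (𝓝[>] 0) (𝓝 (h0 r))) :
    Tendsto (fun ε => ∫ x, h ε (‖x‖ ^ 2) * Ψ x) (𝓝[>] 0) (𝓝 (∫ x, h0 (‖x‖ ^ 2) * Ψ x)) := by
  have : Nontrivial (EuclideanSpace ℝ (Fin d)) := by
    apply Module.nontrivial_of_finrank_pos (R := ℝ)
    simp; omega
  obtain ⟨R0, hR0⟩ := hs.isBounded.exists_norm_le
  obtain ⟨C, hC⟩ := hbd (R0 ^ 2 + 1) (by nlinarith [sq_nonneg R0])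
  have hne : ∀ᵐ x : EuclideanSpace ℝ (Fin d), x ≠ 0 := by
    simp [ae_iff]
  apply tendsto_integral_filter_of_dominated_convergence (fun x => ‖(C * ‖x‖ ^ (2 * b)) * Ψ x‖)
  · filter_upwards [self_mem_nhdsWithin] with ε hε
    apply Continuous.aestronglyMeasurable
    refine Continuous.mul ?_ hΨ
    exact (hcont ε hε).comp_continuous (by fun_prop) (fun x => mem_Ici.mpr (sq_nonneg _))
  · have : ∀ᶠ ε : ℝ in 𝓝[>] 0, ε ∈ Ioc (0 : ℝ) 1 := Ioc_mem_nhdsGT one_pos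
    filter_upwards [this] with ε hε
    filter_upwards [hne] with x hx
    by_cases hx' : Ψ x = 0
    · simp [hx']
    have hxn : 0 < ‖x‖ := norm_pos_iff.mpr hx
    have hxR : ‖x‖ ≤ R0 := hR0 x (subset_tsupport _ hx')
    have h1 := hC ε (‖x‖ ^ 2) hε.1 hε.2 (by positivity) (by nlinarith)
    rw [norm_mul, norm_mul]
    gcongr
    rw [Real.norm_eq_abs]
    refine h1.trans ?_
    rw [Real.rpow_mul hxn.le, Real.rpow_two]
    exact le_abs_self _
  · apply Integrable.norm
    have := (locallyIntegrable_of_norm_le_rpow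
      (E := EuclideanSpace ℝ (Fin d)) (μ := volume) (f := fun x => C * ‖x‖ ^ (2 * b))
      (C := |C|) (α := - (2 * b)) (by simpa using hd)
      (by simp; linarith) (Eventually.of_forall fun x => ?_)
      (by apply Measurable.aestronglyMeasurable; fun_prop))
    · exact this.integrable_smul_right_of_hasCompactSupport hΨ hs
    · rw [norm_mul, neg_neg]
      simp [abs_of_nonneg (Real.rpow_nonneg (norm_nonneg x) (2 * b))]
  · filter_upwards [hne] with x hx
    have hxn : 0 < ‖x‖ := norm_pos_iff.mpr hx
    exact (hlim _ (by positivity)).mul_const _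

lemma logPow_continuousOn (a A B : ℝ) : ContinuousOn (logPow a A B) (Ioi 0) :=
  fun _ hs => (logPow_hasDerivAt a A B hs).continuousAt.continuousWithinAt

lemma logPow_shift_continuousOn (a A B ε : ℝ) (hε : 0 < ε) :
    ContinuousOn (fun r => logPow a A B (r + ε)) (Ici 0) :=
  (logPow_continuousOn a A B).comp (by fun_prop) (fun r (hr : 0 ≤ r) => by
    show 0 < r + ε
    linarith)

lemma logPow_shift_tendsto (a A B r : ℝ) (hr : 0 < r) :
    Tendsto (fun ε => logPow a A B (r + ε)) (𝓝[>] 0) (𝓝 (logPow a A B r)) := by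
  have h : ContinuousAt (logPow a A B) (r + 0) := by
    rw [add_zero]; exact (logPow_hasDerivAt a A B hr).continuousAt
  have h2 : ContinuousAt (fun ε => logPow a A B (r + ε)) 0 :=
    ContinuousAt.comp (f := fun ε => r + ε) (g := logPow a A B) h (by fun_prop)
  have := h2.tendsto.mono_left (nhdsWithin_le_nhds (s := Ioi 0))
  simpa using this

lemma exists_exp (a : ℝ) (hd : 1 ≤ d) (ha : -(d : ℝ) / 2 < a) :
    ∃ b : ℝ, -(d : ℝ) / 2 < b ∧ b < a ∧ b ≤ 0 := by
  have hd' : (1 : ℝ) ≤ d := by exact_mod_cast hd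
  obtain ⟨b, h1, h2⟩ := exists_between (lt_min ha (show -(d : ℝ) / 2 < 0 by linarith))
  exact ⟨b, h1, h2.trans_le (min_le_left _ _), (h2.trans_le (min_le_right _ _)).le⟩

lemma logPow_shift_bound (a b A B R : ℝ) (hab : b < a) (hb : b ≤ 0) (hR : 1 ≤ R) :
    ∃ C : ℝ, ∀ ε r : ℝ, 0 < ε → ε ≤ 1 → 0 < r → r ≤ R →
      |logPow a A B (r + ε)| ≤ C * r ^ b := by
  obtain ⟨C, hC⟩ := logPow_bound a b A B (R + 1) hab (by linarith)
  refine ⟨C, fun ε r h0 h1 hr hrR => ?_⟩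
  have h2 := hC (r + ε) (by linarith) (by linarith)
  have hp : 0 < (r + ε) ^ b := Real.rpow_pos_of_pos (by linarith) b
  have hC0 : 0 ≤ C := by
    by_contra hneg
    have := abs_nonneg (logPow a A B (r + ε))
    nlinarith
  refine h2.trans ?_
  apply mul_le_mul_of_nonneg_left _ hC0
  exact Real.rpow_le_rpow_of_nonpos hr (by linarith) hb

lemma logPow_tendsto_integral (hd : 1 ≤ d) (Ψ : EuclideanSpace ℝ (Fin d) → ℝ) (hΨ : Continuous Ψ)
    (hs : HasCompactSupport Ψ) (a A B : ℝ) (ha : -(d : ℝ) / 2 < a) :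
    Tendsto (fun ε => ∫ x, logPow a A B (‖x‖ ^ 2 + ε) * Ψ x) (𝓝[>] 0)
      (𝓝 (∫ x, logPow a A B (‖x‖ ^ 2) * Ψ x)) := by
  obtain ⟨b, hb1, hb2, hb3⟩ := exists_exp a hd ha
  exact kernel_tendsto hd Ψ hΨ hs (fun ε r => logPow a A B (r + ε)) _ b hb1
    (fun ε hε => logPow_shift_continuousOn a A B ε hε)
    (fun R hR => logPow_shift_bound a b A B R hb2 hb3 hR)
    (fun r hr => logPow_shift_tendsto a A B r hr)

lemma logPow_eps_tendsto_integral (hd : 1 ≤ d) (Ψ : EuclideanSpace ℝ (Fin d) → ℝ)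
    (hΨ : Continuous Ψ)
    (hs : HasCompactSupport Ψ) (a A B : ℝ) (ha : -(d : ℝ) / 2 < a) :
    Tendsto (fun ε => ∫ x, (ε * logPow (a - 1) A B (‖x‖ ^ 2 + ε)) * Ψ x) (𝓝[>] 0) (𝓝 0) := by
  obtain ⟨b, hb1, hb2, hb3⟩ := exists_exp a hd ha
  have := kernel_tendsto hd Ψ hΨ hs (fun ε r => ε * logPow (a - 1) A B (r + ε)) (fun _ => 0) b hb1
    (fun ε hε => continuousOn_const.mul (logPow_shift_continuousOn _ A B ε hε))
    (fun R hR => ?_)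
    (fun r hr => ?_)
  · simpa using this
  · obtain ⟨C, hC⟩ := logPow_shift_bound a b A B R hb2 hb3 hR
    refine ⟨C, fun ε r h0 h1 hr hrR => le_trans ?_ (hC ε r h0 h1 hr hrR)⟩
    have hpos : 0 < r + ε := by linarith
    have : logPow a A B (r + ε) = (r + ε) * logPow (a - 1) A B (r + ε) := by
      unfold logPow
      rw [← mul_assoc, mul_comm (r + ε) ((r + ε) ^ (a - 1)), ← Real.rpow_add_one hpos.ne']
      simp
    rw [this, abs_mul, abs_mul, abs_of_pos h0, abs_of_pos hpos]
    gcongr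
    linarith
  · have h1 : Tendsto (fun ε : ℝ => ε) (𝓝[>] 0) (𝓝 0) :=
      tendsto_id.mono_left nhdsWithin_le_nhds
    simpa using h1.mul (logPow_shift_tendsto (a - 1) A B r hr)

lemma ibp_dir (u ψ : EuclideanSpace ℝ (Fin d) → ℝ) (hu : ContDiff ℝ 2 u) (hψ : ContDiff ℝ 2 ψ)
    (hs : HasCompactSupport ψ) (v : EuclideanSpace ℝ (Fin d)) :
    ∫ x, u x * fderiv ℝ (fun y => fderiv ℝ ψ y v) x v =
      ∫ x, fderiv ℝ (fun y => fderiv ℝ u y v) x v * ψ x := by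
  have hu1 : ContDiff ℝ 1 (fun y => fderiv ℝ u y v) :=
    (hu.fderiv_right (m := 1) (by norm_num)).clm_apply contDiff_const
  have hψ1 : ContDiff ℝ 1 (fun y => fderiv ℝ ψ y v) :=
    (hψ.fderiv_right (m := 1) (by norm_num)).clm_apply contDiff_const
  have hu2 : Continuous (fun x => fderiv ℝ (fun y => fderiv ℝ u y v) x v) :=
    (hu1.continuous_fderiv (by norm_num)).clm_apply continuous_const
  have hψ2 : Continuous (fun x => fderiv ℝ (fun y => fderiv ℝ ψ y v) x v) :=
    (hψ1.continuous_fderiv (by norm_num)).clm_apply continuous_const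
  have hs1 : HasCompactSupport (fun y => fderiv ℝ ψ y v) := hs.fderiv_apply ℝ v
  have hs2 : HasCompactSupport (fun x => fderiv ℝ (fun y => fderiv ℝ ψ y v) x v) :=
    hs1.fderiv_apply ℝ v
  rw [integral_mul_fderiv_eq_neg_fderiv_mul_of_integrable
      ((hu1.continuous.mul hψ1.continuous).integrable_of_hasCompactSupport hs1.mul_left)
      ((hu.continuous.mul hψ2).integrable_of_hasCompactSupport hs2.mul_left)
      ((hu.continuous.mul hψ1.continuous).integrable_of_hasCompactSupport hs1.mul_left)
      (fun x _ => (hu.differentiable (by norm_num)) x)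
      (fun x _ => (hψ1.differentiable (by norm_num)) x)]
  rw [integral_mul_fderiv_eq_neg_fderiv_mul_of_integrable
      ((hu2.mul hψ.continuous).integrable_of_hasCompactSupport hs.mul_left)
      ((hu1.continuous.mul hψ1.continuous).integrable_of_hasCompactSupport hs1.mul_left)
      ((hu1.continuous.mul hψ.continuous).integrable_of_hasCompactSupport hs.mul_left)
      (fun x _ => (hu1.differentiable (by norm_num)) x)
      (fun x _ => (hψ.differentiable (by norm_num)) x)]
  ring

lemma ibp_laplacian (u ψ : EuclideanSpace ℝ (Fin d) → ℝ) (hu : ContDiff ℝ 2 u)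
    (hψ : ContDiff ℝ 2 ψ) (hs : HasCompactSupport ψ) :
    ∫ x, u x * laplacian ψ x = ∫ x, laplacian u x * ψ x := by
  unfold laplacian
  simp_rw [Finset.mul_sum, Finset.sum_mul]
  rw [integral_finsetSum, integral_finsetSum]
  · exact Finset.sum_congr rfl fun i _ => ibp_dir u ψ hu hψ hs _
  · intro i _
    have hu1 : ContDiff ℝ 1 (fun y => fderiv ℝ u y (EuclideanSpace.single i 1)) :=
      (hu.fderiv_right (m := 1) (by norm_num)).clm_apply contDiff_const
    have hu2 := (hu1.continuous_fderiv (by norm_num)).clm_apply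
      (continuous_const (y := (EuclideanSpace.single i 1 : EuclideanSpace ℝ (Fin d))))
    exact (hu2.mul hψ.continuous).integrable_of_hasCompactSupport hs.mul_left
  · intro i _
    have hψ1 : ContDiff ℝ 1 (fun y => fderiv ℝ ψ y (EuclideanSpace.single i 1)) :=
      (hψ.fderiv_right (m := 1) (by norm_num)).clm_apply contDiff_const
    have hψ2 := (hψ1.continuous_fderiv (by norm_num)).clm_apply
      (continuous_const (y := (EuclideanSpace.single i 1 : EuclideanSpace ℝ (Fin d))))
    exact (hu.continuous.mul hψ2).integrable_of_hasCompactSupport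
      ((hs.fderiv_apply ℝ _).fderiv_apply ℝ _).mul_left

lemma laplacian_contDiff (ψ : EuclideanSpace ℝ (Fin d) → ℝ) (hψ : ContDiff ℝ (⊤ : ℕ∞) ψ) :
    ContDiff ℝ (⊤ : ℕ∞) (laplacian ψ) := by
  unfold laplacian
  refine ContDiff.sum fun i _ => ?_
  have h1 : ContDiff ℝ (⊤ : ℕ∞) (fun y => fderiv ℝ ψ y (EuclideanSpace.single i 1)) :=
    (hψ.fderiv_right (m := (⊤ : ℕ∞)) (by norm_num)).clm_apply contDiff_const
  exact (h1.fderiv_right (m := (⊤ : ℕ∞)) (by norm_num)).clm_apply contDiff_const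

lemma laplacian_hasCompactSupport (ψ : EuclideanSpace ℝ (Fin d) → ℝ) (hs : HasCompactSupport ψ) :
    HasCompactSupport (laplacian ψ) := by
  have : ∀ s : Finset (Fin d), HasCompactSupport (fun x => ∑ i ∈ s,
      fderiv ℝ (fun y => fderiv ℝ ψ y (EuclideanSpace.single i 1)) x
        (EuclideanSpace.single i 1)) := by
    intro s
    classical
    induction s using Finset.induction_on with
    | empty =>
      simp only [Finset.sum_empty]
      exact HasCompactSupport.zero
    | insert i s hi ih =>
      simp_rw [Finset.sum_insert hi]
      exact HasCompactSupport.add ((hs.fderiv_apply ℝ _).fderiv_apply ℝ _) ih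
  exact this Finset.univ

lemma logPow_norm_contDiff (a A B ε : ℝ) (hε : 0 < ε) :
    ContDiff ℝ 2 (fun x : EuclideanSpace ℝ (Fin d) => logPow a A B (‖x‖ ^ 2 + ε)) := by
  unfold logPow
  have h1 : ContDiff ℝ 2 (fun x : EuclideanSpace ℝ (Fin d) => ‖x‖ ^ 2 + ε) :=
    (contDiff_norm_sq ℝ).add contDiff_const
  have hne : ∀ x : EuclideanSpace ℝ (Fin d), ‖x‖ ^ 2 + ε ≠ 0 := fun x => by positivity
  exact (h1.rpow_const_of_ne hne).mul
    ((contDiff_const.mul (h1.log hne)).add contDiff_const)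

lemma logPow_norm_hasFDerivAt (a A B ε : ℝ) (hε : 0 < ε) (x : EuclideanSpace ℝ (Fin d)) :
    HasFDerivAt (fun x : EuclideanSpace ℝ (Fin d) => logPow a A B (‖x‖ ^ 2 + ε))
      (logPow (a - 1) (a * A) (a * B + A) (‖x‖ ^ 2 + ε) • (2 • innerSL ℝ x)) x := by
  have h1 : HasFDerivAt (fun x : EuclideanSpace ℝ (Fin d) => ‖x‖ ^ 2 + ε) (2 • innerSL ℝ x) x :=
    (HasStrictFDerivAt.hasFDerivAt (hasStrictFDerivAt_norm_sq x)).add_const ε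
  exact (logPow_hasDerivAt a A B (s := ‖x‖ ^ 2 + ε) (by positivity)).comp_hasFDerivAt x h1

lemma logPow_laplacian (a A B ε : ℝ) (hε : 0 < ε) (x : EuclideanSpace ℝ (Fin d)) :
    laplacian (fun x : EuclideanSpace ℝ (Fin d) => logPow a A B (‖x‖ ^ 2 + ε)) x =
      2 * d * logPow (a - 1) (a * A) (a * B + A) (‖x‖ ^ 2 + ε) +
      4 * ‖x‖ ^ 2 * logPow (a - 1 - 1) ((a - 1) * (a * A)) ((a - 1) * (a * B + A) + a * A)
        (‖x‖ ^ 2 + ε) := by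
  unfold laplacian
  have key : ∀ i : Fin d, fderiv ℝ (fun y => fderiv ℝ
      (fun x : EuclideanSpace ℝ (Fin d) => logPow a A B (‖x‖ ^ 2 + ε)) y
        (EuclideanSpace.single i 1)) x (EuclideanSpace.single i 1) =
      2 * logPow (a - 1) (a * A) (a * B + A) (‖x‖ ^ 2 + ε) +
      4 * (x i) ^ 2 * logPow (a - 1 - 1) ((a - 1) * (a * A)) ((a - 1) * (a * B + A) + a * A)
        (‖x‖ ^ 2 + ε) := by
    intro i
    have h1 : (fun y => fderiv ℝ
      (fun x : EuclideanSpace ℝ (Fin d) => logPow a A B (‖x‖ ^ 2 + ε)) y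
        (EuclideanSpace.single i 1)) = fun y =>
        logPow (a - 1) (a * A) (a * B + A) (‖y‖ ^ 2 + ε) * (2 * (y i)) := by
      funext y
      rw [(logPow_norm_hasFDerivAt a A B ε hε y).fderiv]
      simp [EuclideanSpace.inner_single_right]
    rw [h1]
    have h2 : HasFDerivAt (fun y : EuclideanSpace ℝ (Fin d) => 2 * (y i))
        ((2 : ℝ) • (EuclideanSpace.proj i : EuclideanSpace ℝ (Fin d) →L[ℝ] ℝ)) x :=
      (EuclideanSpace.proj i : EuclideanSpace ℝ (Fin d) →L[ℝ] ℝ).hasFDerivAt.const_mul 2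
    have h3 := (logPow_norm_hasFDerivAt (a - 1) (a * A) (a * B + A) ε hε x).mul h2
    erw [HasFDerivAt.fderiv h3]
    simp [EuclideanSpace.inner_single_right]
    ring
  simp_rw [key]
  have hn : ‖x‖ ^ 2 = ∑ i, (x i) ^ 2 := by
    rw [EuclideanSpace.norm_sq_eq]
    simp
  rw [Finset.sum_add_distrib, ← Finset.sum_mul, ← Finset.sum_mul, ← Finset.mul_sum, ← hn]
  simp
  left
  ring

lemma logPow_mul_self (a A B s : ℝ) (hs : 0 < s) :
    s * logPow (a - 1) A B s = logPow a A B s := by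
  unfold logPow
  rw [← mul_assoc, mul_comm s (s ^ (a - 1)), ← Real.rpow_add_one hs.ne']
  simp

/-- The regularized identity. -/
lemma logPow_reg (a A B ε : ℝ) (hε : 0 < ε) (ψ : EuclideanSpace ℝ (Fin d) → ℝ)
    (hψ : ContDiff ℝ (⊤ : ℕ∞) ψ) (hs : HasCompactSupport ψ) :
    ∫ x, logPow a A B (‖x‖ ^ 2 + ε) * laplacian ψ x =
      (∫ x, logPow (a - 1) (a * (4 * (a - 1) + 2 * d) * A)
        (a * (4 * (a - 1) + 2 * d) * B + (4 * (2 * a - 1) + 2 * d) * A) (‖x‖ ^ 2 + ε) * ψ x) -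
      4 * ∫ x, (ε * logPow (a - 1 - 1) ((a - 1) * (a * A)) ((a - 1) * (a * B + A) + a * A)
        (‖x‖ ^ 2 + ε)) * ψ x := by
  rw [ibp_laplacian _ ψ (logPow_norm_contDiff a A B ε hε) (hψ.of_le (by norm_cast)) hs,
    ← integral_const_mul, ← integral_sub]
  · congr 1
    funext x
    rw [logPow_laplacian a A B ε hε]
    have hpos : 0 < ‖x‖ ^ 2 + ε := by positivity
    have h1 := logPow_mul_self (a - 1) ((a - 1) * (a * A)) ((a - 1) * (a * B + A) + a * A) _ hpos
    have h2 : logPow (a - 1) (a * (4 * (a - 1) + 2 * d) * A)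
        (a * (4 * (a - 1) + 2 * d) * B + (4 * (2 * a - 1) + 2 * d) * A) (‖x‖ ^ 2 + ε) =
        4 * logPow (a - 1) ((a - 1) * (a * A)) ((a - 1) * (a * B + A) + a * A) (‖x‖ ^ 2 + ε)
        + 2 * d * logPow (a - 1) (a * A) (a * B + A) (‖x‖ ^ 2 + ε) := by
      unfold logPow
      ring
    rw [h2]
    linear_combination (4 * ψ x) * h1
  · exact ((logPow_norm_contDiff _ _ _ ε hε).continuous.mul
      hψ.continuous).integrable_of_hasCompactSupport hs.mul_left
  · exact (((continuous_const.mul (logPow_norm_contDiff _ _ _ ε hε).continuous).mul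
      hψ.continuous).integrable_of_hasCompactSupport hs.mul_left).const_mul 4

lemma logPow_step (hd : 1 ≤ d) (a A B : ℝ) (ha : -(d : ℝ) / 2 < a - 1)
    (ψ : EuclideanSpace ℝ (Fin d) → ℝ)
    (hψ : ContDiff ℝ (⊤ : ℕ∞) ψ) (hs : HasCompactSupport ψ) :
    ∫ x, logPow a A B (‖x‖ ^ 2) * laplacian ψ x =
      (∫ x, logPow (a - 1) (a * (4 * (a - 1) + 2 * d) * A)
        (a * (4 * (a - 1) + 2 * d) * B + (4 * (2 * a - 1) + 2 * d) * A) (‖x‖ ^ 2) * ψ x) := by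
  have h1 := logPow_tendsto_integral hd (laplacian ψ) (laplacian_contDiff ψ hψ).continuous
    (laplacian_hasCompactSupport ψ hs) a A B (by linarith)
  have h2 := logPow_tendsto_integral hd ψ hψ.continuous hs (a - 1)
    (a * (4 * (a - 1) + 2 * d) * A)
    (a * (4 * (a - 1) + 2 * d) * B + (4 * (2 * a - 1) + 2 * d) * A) ha
  have h3 := logPow_eps_tendsto_integral hd ψ hψ.continuous hs (a - 1)
    ((a - 1) * (a * A)) ((a - 1) * (a * B + A) + a * A) ha
  have h4 := h2.sub (h3.const_mul 4)
  rw [mul_zero, sub_zero] at h4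
  refine tendsto_nhds_unique h1 (h4.congr' ?_)
  filter_upwards [self_mem_nhdsWithin] with ε hε
  exact (logPow_reg a A B ε hε ψ hψ hs).symm

lemma rpow_antideriv (hd : 1 ≤ d) {y : ℝ} (hy : 0 < y) :
    HasDerivAt (fun y : ℝ => y ^ d * (1 + y ^ 2) ^ (-(d : ℝ) / 2))
      (d * (y ^ (d - 1) * (1 + y ^ 2) ^ (-(d : ℝ) / 2 - 1))) y := by
  have hp : 0 < 1 + y ^ 2 := by positivity
  have h1 : HasDerivAt (fun y : ℝ => y ^ d) (d * y ^ (d - 1)) y := hasDerivAt_pow d y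
  have h2 : HasDerivAt (fun y : ℝ => 1 + y ^ 2) (2 * y) y := by
    simpa using (hasDerivAt_pow 2 y).const_add 1
  have h3 := h2.rpow_const (p := -(d : ℝ) / 2) (Or.inl hp.ne')
  refine (h1.mul h3).congr_deriv ?_
  have e1 : (1 + y ^ 2) ^ (-(d : ℝ) / 2) = (1 + y ^ 2) ^ (-(d : ℝ) / 2 - 1) * (1 + y ^ 2) := by
    rw [← Real.rpow_add_one hp.ne']; simp
  have e2 : y ^ d = y ^ (d - 1) * y := by
    rw [← pow_succ]; congr 1; omega
  rw [e1, e2]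
  ring

lemma rpow_antideriv_tendsto :
    Tendsto (fun y : ℝ => y ^ d * (1 + y ^ 2) ^ (-(d : ℝ) / 2)) atTop (𝓝 1) := by
  have h1 : Tendsto (fun y : ℝ => ((y ^ 2)⁻¹ + 1) ^ (-(d : ℝ) / 2)) atTop (𝓝 1) := by
    have h2 : Tendsto (fun y : ℝ => (y ^ 2)⁻¹ + 1) atTop (𝓝 (0 + 1)) :=
      (tendsto_inv_atTop_zero.comp (tendsto_pow_atTop (by norm_num))).add_const 1
    have := h2.rpow_const (p := -(d : ℝ) / 2) (Or.inl (by norm_num))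
    simpa using this
  refine h1.congr' ?_
  filter_upwards [eventually_gt_atTop 0] with y hy
  have : (y ^ 2)⁻¹ + 1 = (1 + y ^ 2) * (y ^ 2)⁻¹ := by field_simp
  rw [this, Real.mul_rpow (by positivity) (by positivity), mul_comm]
  congr 1
  rw [Real.inv_rpow (by positivity), ← Real.rpow_natCast y 2, ← Real.rpow_mul hy.le,
    ← Real.rpow_neg hy.le, ← Real.rpow_natCast]
  congr 1
  push_cast
  ring

lemma base_integral (hd : 1 ≤ d) :
    ∫ y : EuclideanSpace ℝ (Fin d), (1 + ‖y‖ ^ 2) ^ (-(d : ℝ) / 2 - 1) =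
      Real.pi ^ ((d : ℝ) / 2) / Real.Gamma ((d : ℝ) / 2 + 1) := by
  have hnt : Nontrivial (EuclideanSpace ℝ (Fin d)) := by
    apply Module.nontrivial_of_finrank_pos (R := ℝ)
    simp; omega
  have hne : Nonempty (Fin d) := ⟨⟨0, by omega⟩⟩
  have h1 := integral_fun_norm_addHaar (volume : Measure (EuclideanSpace ℝ (Fin d)))
    (fun r : ℝ => (1 + r ^ 2) ^ (-(d : ℝ) / 2 - 1))
  rw [h1]
  have h2 := integral_Ioi_of_hasDerivAt_of_nonneg (a := 0)
    (g := fun y : ℝ => y ^ d * (1 + y ^ 2) ^ (-(d : ℝ) / 2))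
    (g' := fun y : ℝ => d * (y ^ (d - 1) * (1 + y ^ 2) ^ (-(d : ℝ) / 2 - 1))) (l := 1) ?_
    (fun y hy => rpow_antideriv hd hy)
    (fun y (hy : 0 < y) => by positivity) rpow_antideriv_tendsto
  · rw [integral_const_mul] at h2
    have hv : volume.real (Metric.ball (0 : EuclideanSpace ℝ (Fin d)) 1) =
        Real.pi ^ ((d : ℝ) / 2) / Real.Gamma ((d : ℝ) / 2 + 1) := by
      rw [Measure.real, EuclideanSpace.volume_ball]
      simp only [ENNReal.ofReal_one, one_pow, one_mul, Fintype.card_fin]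
      rw [ENNReal.toReal_ofReal]
      · congr 1
        rw [Real.sqrt_eq_rpow, ← Real.rpow_natCast, ← Real.rpow_mul Real.pi_pos.le]
        congr 1
        ring
      · have := Real.Gamma_pos_of_pos (s := (d : ℝ) / 2 + 1) (by positivity)
        positivity
    rw [hv]
    simp only [finrank_euclideanSpace, Fintype.card_fin, smul_eq_mul, nsmul_eq_mul]
    have hz : (0 : ℝ) ^ d = 0 := zero_pow (by omega)
    rw [hz] at h2
    linear_combination (Real.pi ^ ((d : ℝ) / 2) / Real.Gamma ((d : ℝ) / 2 + 1)) * h2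
  · apply Continuous.continuousWithinAt
    refine (continuous_pow d).mul ?_
    exact Continuous.rpow_const (by fun_prop) (fun y => Or.inl (by positivity))

lemma approx_identity (hd : 1 ≤ d) (ψ : EuclideanSpace ℝ (Fin d) → ℝ)
    (hψ : Continuous ψ) (hs : HasCompactSupport ψ) :
    Tendsto (fun ε => ∫ x, (ε * (‖x‖ ^ 2 + ε) ^ (-(d : ℝ) / 2 - 1)) * ψ x) (𝓝[>] 0)
      (𝓝 (Real.pi ^ ((d : ℝ) / 2) / Real.Gamma ((d : ℝ) / 2 + 1) * ψ 0)) := by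
  obtain ⟨M, hM⟩ := hψ.bounded_above_of_compact_support hs
  have hcontK : Continuous (fun y : EuclideanSpace ℝ (Fin d) =>
      (1 + ‖y‖ ^ 2) ^ (-(d : ℝ) / 2 - 1)) :=
    Continuous.rpow_const (by fun_prop) (fun y => Or.inl (by positivity))
  have hmain : Tendsto (fun ε : ℝ => ∫ y, (1 + ‖y‖ ^ 2) ^ (-(d : ℝ) / 2 - 1) * ψ (√ε • y))
      (𝓝[>] 0) (𝓝 (∫ y : EuclideanSpace ℝ (Fin d),
        (1 + ‖y‖ ^ 2) ^ (-(d : ℝ) / 2 - 1) * ψ 0)) := by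
    apply tendsto_integral_filter_of_dominated_convergence
      (fun y => (1 + ‖y‖ ^ 2) ^ (-(d : ℝ) / 2 - 1) * M)
    · refine Eventually.of_forall fun ε => Continuous.aestronglyMeasurable ?_
      exact hcontK.mul (hψ.comp (by fun_prop))
    · refine Eventually.of_forall fun ε => Eventually.of_forall fun y => ?_
      rw [norm_mul, Real.norm_of_nonneg (by positivity)]
      gcongr
      exact hM _
    · apply Integrable.mul_const
      have := integrable_rpow_neg_one_add_norm_sq (E := EuclideanSpace ℝ (Fin d)) (μ := volume)
        (r := d + 2) (by simp)
      convert this using 3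
      ring
    · refine Eventually.of_forall fun y => Tendsto.const_mul _ ?_
      have h1 : Continuous (fun ε : ℝ => ψ (√ε • y)) :=
        hψ.comp (Real.continuous_sqrt.smul continuous_const)
      have := (h1.tendsto 0).mono_left (nhdsWithin_le_nhds (s := Ioi 0))
      simpa using this
  rw [integral_mul_const, base_integral hd] at hmain
  refine hmain.congr' ?_
  filter_upwards [self_mem_nhdsWithin] with ε hε
  have hε : 0 < ε := hε
  have hR : 0 < √ε := Real.sqrt_pos.mpr hε
  have h1 := Measure.integral_comp_smul_of_nonneg
    (volume : Measure (EuclideanSpace ℝ (Fin d)))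
    (fun x => (ε * (‖x‖ ^ 2 + ε) ^ (-(d : ℝ) / 2 - 1)) * ψ x) (√ε) (hR := hR.le)
  have h2 : ∀ y : EuclideanSpace ℝ (Fin d),
      (ε * (‖√ε • y‖ ^ 2 + ε) ^ (-(d : ℝ) / 2 - 1)) * ψ (√ε • y) =
      (√ε ^ d)⁻¹ * ((1 + ‖y‖ ^ 2) ^ (-(d : ℝ) / 2 - 1) * ψ (√ε • y)) := by
    intro y
    have e1 : ‖√ε • y‖ ^ 2 + ε = ε * (1 + ‖y‖ ^ 2) := by
      rw [norm_smul, mul_pow, Real.norm_of_nonneg hR.le, Real.sq_sqrt hε.le]; ring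
    have e2 : (√ε ^ d)⁻¹ = ε * ε ^ (-(d : ℝ) / 2 - 1) := by
      rw [mul_comm, ← Real.rpow_add_one hε.ne', Real.sqrt_eq_rpow, ← Real.rpow_natCast,
        ← Real.rpow_mul hε.le, ← Real.rpow_neg hε.le]
      congr 1
      ring
    rw [e1, Real.mul_rpow hε.le (by positivity), e2]
    ring
  simp_rw [h2] at h1
  rw [integral_const_mul] at h1
  simp only [finrank_euclideanSpace, Fintype.card_fin, smul_eq_mul] at h1
  exact mul_left_cancel₀ (by positivity) h1

lemma logPow_base (hd : 1 ≤ d) (a A B : ℝ) (ha : a = 1 - (d : ℝ) / 2) (hA : a * A = 0)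
    (ψ : EuclideanSpace ℝ (Fin d) → ℝ)
    (hψ : ContDiff ℝ (⊤ : ℕ∞) ψ) (hs : HasCompactSupport ψ) :
    ∫ x, logPow a A B (‖x‖ ^ 2) * laplacian ψ x =
      -4 * ((a - 1) * (a * B + A)) *
        (Real.pi ^ ((d : ℝ) / 2) / Real.Gamma ((d : ℝ) / 2 + 1)) * ψ 0 := by
  have h1 := logPow_tendsto_integral hd (laplacian ψ) (laplacian_contDiff ψ hψ).continuous
    (laplacian_hasCompactSupport ψ hs) a A B (by rw [ha]; linarith)
  have h2 := (approx_identity hd ψ hψ.continuous hs).const_mul (-4 * ((a - 1) * (a * B + A)))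
  rw [mul_assoc]
  refine tendsto_nhds_unique h1 (h2.congr' ?_)
  filter_upwards [self_mem_nhdsWithin] with ε hε
  rw [logPow_reg a A B ε hε ψ hψ hs]
  have c1 : a * (4 * (a - 1) + 2 * d) * A = 0 := by
    linear_combination (4 * (a - 1) + 2 * d) * hA
  have c2 : a * (4 * (a - 1) + 2 * d) * B + (4 * (2 * a - 1) + 2 * d) * A = 0 := by
    have : (d : ℝ) = 2 - 2 * a := by rw [ha]; ring
    rw [this]
    linear_combination 4 * hA
  have c3 : -(d : ℝ) / 2 - 1 = a - 1 - 1 := by rw [ha]; ring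
  rw [c1, c2, hA, c3]
  simp only [logPow, zero_mul, mul_zero, add_zero, zero_add, integral_zero, zero_sub]
  rw [← integral_const_mul, ← integral_const_mul, ← integral_neg]
  congr 1
  funext x
  ring

noncomputable def coefC (d k : ℕ) : ℝ :=
  (-1 : ℝ) ^ (k + d / 2 + 1) /
    ((Nat.factorial (k - 1) : ℝ) * (Nat.factorial (k - d / 2) : ℝ) * 2 ^ (2 * k - 1) *
          Real.pi ^ (d / 2))

noncomputable def coefA (d k : ℕ) : ℝ :=
  if Even d ∧ d / 2 ≤ k then coefC d k / 2 else 0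

noncomputable def coefB (d k : ℕ) : ℝ :=
  if Even d ∧ d / 2 ≤ k then - coefC d k * betaConst (k - d / 2) d else
    Real.Gamma ((d : ℝ) / 2 - (k : ℝ)) /
      ((Nat.factorial (k - 1) : ℝ) * 2 ^ (2 * k) * Real.pi ^ ((d : ℝ) / 2))

lemma polyharmonicG_eq (k : ℕ) (x x' : EuclideanSpace ℝ (Fin d)) :
    polyharmonicG d k x x' =
      logPow ((k : ℝ) - (d : ℝ) / 2) (coefA d k) (coefB d k) (‖x - x'‖ ^ 2) := by
  have h : ‖x - x'‖ ^ (2 * (k : ℝ) - (d : ℝ)) = (‖x - x'‖ ^ 2) ^ ((k : ℝ) - (d : ℝ) / 2) := by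
    rw [← Real.rpow_natCast _ 2, ← Real.rpow_mul (norm_nonneg _)]
    congr 1
    push_cast
    ring
  unfold polyharmonicG logPow coefA coefB
  rw [h]
  split_ifs with hc
  · rw [Real.log_pow]
    unfold coefC
    push_cast
    ring
  · ring

lemma coef_rec (hd : 1 ≤ d) (k : ℕ) (hk : 1 ≤ k) (a : ℝ) (ha : a = ((k + 1 : ℕ) : ℝ) - (d : ℝ) / 2) :
    -(a * (4 * (a - 1) + 2 * d) * coefA d (k + 1)) = coefA d k ∧
    -(a * (4 * (a - 1) + 2 * d) * coefB d (k + 1) + (4 * (2 * a - 1) + 2 * d) * coefA d (k + 1))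
      = coefB d k := by
  obtain ⟨n, rfl⟩ : ∃ n, k = n + 1 := ⟨k - 1, by omega⟩
  have hda : (d : ℝ) = 2 * ((n + 1 + 1 : ℕ) : ℝ) - 2 * a := by rw [ha]; ring
  have hpi : Real.pi ≠ 0 := Real.pi_ne_zero
  have hpw : Real.pi ^ ((d : ℝ) / 2) ≠ 0 := (Real.rpow_pos_of_pos Real.pi_pos _).ne'
  have hfac : ((n.factorial : ℕ) : ℝ) ≠ 0 := by exact_mod_cast n.factorial_ne_zero
  by_cases h1 : Even d ∧ d / 2 ≤ n + 1
  · -- both logarithmic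
    have h2 : Even d ∧ d / 2 ≤ n + 1 + 1 := ⟨h1.1, by omega⟩
    obtain ⟨⟨m, rfl⟩, hm⟩ := h1
    have hm2 : (m + m) / 2 = m := by omega
    rw [hm2] at hm
    obtain ⟨p, hp⟩ : ∃ p, n + 1 = m + p := ⟨n + 1 - m, by omega⟩
    have hap : a = p + 1 := by
      rw [ha, hp]; push_cast; ring
    have e1 : n + 1 + 1 - m = p + 1 := by omega
    have e2 : n + 1 - m = p := by omega
    have e3 : 2 * (n + 1 + 1) - 1 = 2 * n + 3 := by omega
    have e4 : 2 * (n + 1) - 1 = 2 * n + 1 := by omega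
    have hC : coefC (m + m) (n + 1) =
        -(4 * (n + 1) * (p + 1)) * coefC (m + m) (n + 1 + 1) := by
      unfold coefC
      rw [hm2, e1, e2, e3, e4, Nat.add_sub_cancel, Nat.add_sub_cancel, Nat.factorial_succ,
        Nat.factorial_succ]
      have : ((p.factorial : ℕ) : ℝ) ≠ 0 := by exact_mod_cast p.factorial_ne_zero
      push_cast
      field_simp
      ring
    have hβ : betaConst (p + 1) (m + m) = betaConst p (m + m) +
        (1 / 2) * (1 / (p + 1) + 1 / (n + 1)) := by
      unfold betaConst harmonicNum
      rw [hm2]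
      have e5 : m + (p + 1) - 1 = n + 1 := by omega
      have e6 : m + p - 1 = n := by omega
      rw [e5, e6, Finset.sum_range_succ, Finset.sum_range_succ]
      ring
    have hdd : ((m + m : ℕ) : ℝ) = 2 * (n + 1 - p) := by
      have : (n : ℝ) + 1 = m + p := by exact_mod_cast hp
      push_cast; linarith
    unfold coefA coefB
    rw [if_pos h2, if_pos h2, if_pos (by rw [hm2]; exact ⟨h2.1, hm⟩),
      if_pos (by rw [hm2]; exact ⟨h2.1, hm⟩), hm2, e1, e2, hC, hβ, hdd, hap]
    constructor
    · ring
    · field_simp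
      ring
  · by_cases h2 : Even d ∧ d / 2 ≤ n + 1 + 1
    · -- transition
      obtain ⟨⟨m, rfl⟩, hm⟩ := h2
      have hm2 : (m + m) / 2 = m := by omega
      have hmn : m = n + 1 + 1 := by
        have : ¬ (m + m) / 2 ≤ n + 1 := fun h => h1 ⟨⟨m, rfl⟩, h⟩
        omega
      have ha0 : a = 0 := by rw [ha, hmn]; push_cast; ring
      have hgam : ((m + m : ℕ) : ℝ) / 2 - ((n + 1 : ℕ) : ℝ) = 1 := by
        rw [hmn]; push_cast; ring
      have hpp : Real.pi ^ (((m + m : ℕ) : ℝ) / 2) = Real.pi ^ m := by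
        rw [← Real.rpow_natCast]; congr 1; push_cast; ring
      unfold coefA coefB
      rw [if_neg h1, if_neg h1, if_pos ⟨⟨m, rfl⟩, hm⟩, ha0, hgam, Real.Gamma_one, hpp]
      constructor
      · ring
      · unfold coefC
        have e3 : 2 * (n + 1 + 1) - 1 = 2 * n + 3 := by omega
        rw [hm2, e3, ← hmn, Nat.sub_self, Nat.add_sub_cancel]
        have e7 : m - 1 = n + 1 := by omega
        have e8 : (-1 : ℝ) ^ (m + m + 1) = -1 := by
          apply Odd.neg_one_pow; exact ⟨m, by ring⟩
        have e9 : ((m + m : ℕ) : ℝ) = 2 * (n + 2) := by rw [hmn]; push_cast; ring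
        rw [e7, e8, e9, Nat.factorial_succ]
        push_cast
        have : Real.pi ^ m ≠ 0 := pow_ne_zero _ hpi
        field_simp
        simp
        ring
    · -- both powers
      unfold coefA coefB
      rw [if_neg h1, if_neg h1, if_neg h2, if_neg h2]
      refine ⟨by ring, ?_⟩
      have hane : -a ≠ 0 := by
        intro h0
        have : (d : ℝ) = ((2 * (n + 1 + 1) : ℕ) : ℝ) := by
          push_cast at hda ⊢; linarith
        have hd2 : d = 2 * (n + 1 + 1) := by exact_mod_cast this
        exact h2 ⟨⟨n + 1 + 1, by omega⟩, by omega⟩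
      have g1 : (d : ℝ) / 2 - ((n + 1 + 1 : ℕ) : ℝ) = -a := by rw [ha]; ring
      have g2 : (d : ℝ) / 2 - ((n + 1 : ℕ) : ℝ) = -a + 1 := by rw [ha]; push_cast; ring
      rw [g1, g2, Real.Gamma_add_one hane, Nat.add_sub_cancel, Nat.add_sub_cancel,
        Nat.factorial_succ]
      have hf : 4 * (a - 1) + 2 * (d : ℝ) = 4 * (n + 1) := by
        rw [ha]; push_cast; ring
      rw [hf]
      push_cast
      field_simp
      ring

lemma coef_base (hd : 1 ≤ d) (a : ℝ) (ha : a = 1 - (d : ℝ) / 2) :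
    a * coefA d 1 = 0 ∧
    -(-4 * ((a - 1) * (a * coefB d 1 + coefA d 1)) *
        (Real.pi ^ ((d : ℝ) / 2) / Real.Gamma ((d : ℝ) / 2 + 1))) = 1 := by
  by_cases h : Even d ∧ d / 2 ≤ 1
  · have hd2 : d = 2 := by
      obtain ⟨⟨m, rfl⟩, h⟩ := h
      omega
    subst hd2
    have ha0 : a = 0 := by rw [ha]; norm_num
    rw [ha0]
    refine ⟨by ring, ?_⟩
    unfold coefA coefC
    rw [if_pos h]
    have : Real.Gamma (1 + 1) = 1 := by rw [Real.Gamma_add_one one_ne_zero, Real.Gamma_one]; simp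
    norm_num [this]
    have := Real.pi_ne_zero
    field_simp
    try norm_num
  · unfold coefA coefB
    rw [if_neg h, if_neg h]
    refine ⟨by ring, ?_⟩
    have hane : (d : ℝ) / 2 - 1 ≠ 0 := by
      intro h0
      have : (d : ℝ) = (2 : ℕ) := by push_cast; linarith
      have hd2 : d = 2 := by exact_mod_cast this
      exact h (by subst hd2; decide)
    have hd0 : (d : ℝ) / 2 ≠ 0 := by positivity
    have g1 : Real.Gamma ((d : ℝ) / 2 + 1) =
        (d : ℝ) / 2 * (((d : ℝ) / 2 - 1) * Real.Gamma ((d : ℝ) / 2 - 1)) := by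
      rw [Real.Gamma_add_one hd0]
      congr 1
      rw [← Real.Gamma_add_one hane]; simp
    have hG : Real.Gamma ((d : ℝ) / 2 + 1) ≠ 0 :=
      (Real.Gamma_pos_of_pos (by positivity)).ne'
    have hpw : Real.pi ^ ((d : ℝ) / 2) ≠ 0 := (Real.rpow_pos_of_pos Real.pi_pos _).ne'
    have hnum : Real.Gamma ((d : ℝ) / 2 + 1) =
        (a - 1) * a * Real.Gamma ((d : ℝ) / 2 - 1) := by rw [g1, ha]; ring
    have e : -(-4 * ((a - 1) * (a * (Real.Gamma ((d : ℝ) / 2 - ((1 : ℕ) : ℝ)) /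
        ((Nat.factorial (1 - 1) : ℝ) * 2 ^ (2 * 1) * Real.pi ^ ((d : ℝ) / 2))) + 0)) *
        (Real.pi ^ ((d : ℝ) / 2) / Real.Gamma ((d : ℝ) / 2 + 1))) =
        ((a - 1) * a * Real.Gamma ((d : ℝ) / 2 - 1)) / Real.Gamma ((d : ℝ) / 2 + 1) := by
      simp only [Nat.sub_self, Nat.factorial_zero, Nat.cast_one]
      field_simp
      ring
    rw [e, ← hnum, div_self hG]

lemma negLapIter_succ (k : ℕ) (f : EuclideanSpace ℝ (Fin d) → ℝ) :
    negLapIter (k + 1) f = fun x => -(laplacian (negLapIter k f) x) := by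
  unfold negLapIter
  rw [Function.iterate_succ_apply']

lemma negLapIter_contDiff (k : ℕ) (f : EuclideanSpace ℝ (Fin d) → ℝ)
    (hf : ContDiff ℝ (⊤ : ℕ∞) f) : ContDiff ℝ (⊤ : ℕ∞) (negLapIter k f) := by
  induction k with
  | zero => exact hf
  | succ k ih => rw [negLapIter_succ]; exact (laplacian_contDiff _ ih).neg

lemma negLapIter_hasCompactSupport (k : ℕ) (f : EuclideanSpace ℝ (Fin d) → ℝ)
    (hf : HasCompactSupport f) : HasCompactSupport (negLapIter k f) := by
  induction k with
  | zero => exact hf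
  | succ k ih => rw [negLapIter_succ]; exact (laplacian_hasCompactSupport _ ih).neg

lemma laplacian_translate (f : EuclideanSpace ℝ (Fin d) → ℝ) (c : EuclideanSpace ℝ (Fin d)) :
    laplacian (fun y => f (y + c)) = fun x => laplacian f (x + c) := by
  funext x
  unfold laplacian
  refine Finset.sum_congr rfl fun i _ => ?_
  have h1 : (fun y => fderiv ℝ (fun y => f (y + c)) y (EuclideanSpace.single i 1)) =
      fun y => (fun z => fderiv ℝ f z (EuclideanSpace.single i 1)) (y + c) := by
    funext y
    rw [fderiv_comp_add_right]
  rw [h1]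
  exact congrArg (fun L => L (EuclideanSpace.single i 1))
    (fderiv_comp_add_right (𝕜 := ℝ) (x := x)
      (f := fun z => fderiv ℝ f z (EuclideanSpace.single i 1)) c)

lemma negLapIter_translate (k : ℕ) (f : EuclideanSpace ℝ (Fin d) → ℝ)
    (c : EuclideanSpace ℝ (Fin d)) :
    negLapIter k (fun y => f (y + c)) = fun x => negLapIter k f (x + c) := by
  induction k with
  | zero => rfl
  | succ k ih =>
    rw [negLapIter_succ, negLapIter_succ, ih, laplacian_translate]

lemma centered (hd : 1 ≤ d) (k : ℕ) (hk : 1 ≤ k) (φ : EuclideanSpace ℝ (Fin d) → ℝ)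
    (hφ : ContDiff ℝ (⊤ : ℕ∞) φ) (hs : HasCompactSupport φ) :
    ∫ x, logPow ((k : ℝ) - (d : ℝ) / 2) (coefA d k) (coefB d k) (‖x‖ ^ 2) * negLapIter k φ x
      = φ 0 := by
  induction k, hk using Nat.le_induction with
  | base =>
    rw [negLapIter_succ]
    have h0 : negLapIter 0 φ = φ := rfl
    rw [h0]
    simp only [mul_neg]
    obtain ⟨c1, c2⟩ := coef_base hd (((1 : ℕ) : ℝ) - (d : ℝ) / 2) (by simp)
    rw [integral_neg, logPow_base hd _ _ _ (by simp) c1 φ hφ hs]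
    linear_combination φ 0 * c2
  | succ k hk ih =>
    rw [negLapIter_succ]
    simp only [mul_neg]
    obtain ⟨c1, c2⟩ := coef_rec hd k hk _ rfl
    have hk' : (1 : ℝ) ≤ k := by exact_mod_cast hk
    rw [integral_neg, logPow_step hd _ _ _ (by push_cast; linarith) _
      (negLapIter_contDiff k φ hφ) (negLapIter_hasCompactSupport k φ hs), ← integral_neg, ← ih]
    congr 1
    funext x
    rw [← c1, ← c2]
    have : ((k + 1 : ℕ) : ℝ) - (d : ℝ) / 2 - 1 = (k : ℝ) - (d : ℝ) / 2 := by push_cast; ring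
    rw [this]
    unfold logPow
    ring

end PolyAux

/-- `G_k^d` is a fundamental solution for `(-Δ)^k` on `ℝ^d`. -/
theorem polyharmonicG_fundamental_solution
    (d k : ℕ) (hd : 1 ≤ d) (hk : 1 ≤ k)
    (x' : EuclideanSpace ℝ (Fin d))
    (φ : EuclideanSpace ℝ (Fin d) → ℝ) (hφ : ContDiff ℝ (⊤ : ℕ∞) φ) (hsupp : HasCompactSupport φ) :
    ∫ x, polyharmonicG d k x x' * negLapIter k φ x = φ x' := by
  have h := PolyAux.centered hd k hk (fun y => φ (y + x'))
    (hφ.comp (contDiff_id.add contDiff_const))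
    (hsupp.comp_homeomorph (Homeomorph.addRight x'))
  rw [PolyAux.negLapIter_translate] at h
  simp only [zero_add] at h
  rw [← h, ← MeasureTheory.integral_add_right_eq_self _ x']
  congr 1
  funext x
  rw [PolyAux.polyharmonicG_eq, add_sub_cancel_right]
end
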